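/- arXiv:2104.14530 — 2 statements merged into one kernel-verified Lean document; each statement's English description precedes it below -/
import Mathlib

section
/- Let q₊,q₋ ∈ ℂ. The signed reflection function φ_{q₊,q₋} is positive definite on B(∞) if and only if either (a) there exist M,N ∈ ℕ with M+N ≠ 0 and ε ∈ {1,−1} such that q₊ = ε/(M+N) and q₋ = (M−N)/(M+N), or (b) q₊ = 0 and q₋ is real with −1 ≤ q₋ ≤ 1. -/
/-!
STATEMENT 3: φ_{q₊,q₋} is positive definite on B(∞) iff
(a) q₊ = ε/(M+N), q₋ = (M−N)/(M+N) for some M,N ∈ ℕ with M+N ≠ 0 and ε ∈ {1,−1}, or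
(b) q₊ = 0 and q₋ is real with −1 ≤ q₋ ≤ 1.
-/

open scoped ComplexOrder

noncomputable section

namespace TypeB

/-- The nontrivial orbits (cycles) of a permutation. -/
def ntOrbits {X : Type*} (σ : Equiv.Perm X) : Set (Set X) :=
  {O | ∃ i : X, σ i ≠ i ∧ O = {j | σ.SameCycle i j}}

/-- Negation of a set of integers. -/
def negSet (B : Set ℤ) : Set ℤ := (fun x : ℤ => -x) '' B

/-- The negative cycles (orbits invariant under negation). -/
def negOrbits (σ : Equiv.Perm ℤ) : Set (Set ℤ) := {O ∈ ntOrbits σ | negSet O = O}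

/-- The positive cycles (orbits not invariant under negation; they come in mirror pairs). -/
def posOrbits (σ : Equiv.Perm ℤ) : Set (Set ℤ) := {O ∈ ntOrbits σ | negSet O ≠ O}

/-- ‖ρ⁺‖ + ‖ρ⁻‖ for σ of cycle type (ρ⁺,ρ⁻): each mirror pair of positive cycles of
common length m contributes m−1, each negative cycle of length 2k contributes k−1. -/
def expPlus (σ : Equiv.Perm ℤ) : ℕ :=
  (∑ᶠ O ∈ posOrbits σ, (O.ncard - 1)) / 2 + ∑ᶠ O ∈ negOrbits σ, (O.ncard / 2 - 1)

/-- ℓ(ρ⁻): the number of negative cycles of σ. -/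
def negCount (σ : Equiv.Perm ℤ) : ℕ := (negOrbits σ).ncard

/-- The signed reflection function φ_{q₊,q₋}(σ) = q₊^{‖ρ⁺‖+‖ρ⁻‖} q₋^{ℓ(ρ⁻)}. -/
def phi (qp qm : ℂ) (σ : Equiv.Perm ℤ) : ℂ := qp ^ expPlus σ * qm ^ negCount σ

/-- The infinite hyperoctahedral group B(∞): finitary permutations of ℤ∖{0}
(permutations of ℤ fixing 0, which is forced) commuting with negation. -/
def BInfSet : Set (Equiv.Perm ℤ) :=
  {σ | (∀ i : ℤ, σ (-i) = -σ i) ∧ {i : ℤ | σ i ≠ i}.Finite}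

/-- A function on a group is positive definite on a subset S: for all g₁,…,g_k ∈ S and
z₁,…,z_k ∈ ℂ, the hermitian sum Σ z_i conj(z_j) f(g_j⁻¹ g_i) is real and ≥ 0. -/
def IsPosDefOn {G : Type*} [Group G] (S : Set G) (f : G → ℂ) : Prop :=
  ∀ (k : ℕ) (g : Fin k → G), (∀ i, g i ∈ S) → ∀ z : Fin k → ℂ,
    0 ≤ ∑ i : Fin k, ∑ j : Fin k, z i * (starRingEnd ℂ) (z j) * f ((g j)⁻¹ * g i)

open Equiv Equiv.Perm

theorem rel_of_sameCycle {X : Type*} (f : Perm X) (r : X → X → Prop) (hr : Equivalence r)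
    (h : ∀ x, r x (f x)) {x y : X} (hxy : f.SameCycle x y) : r x y := by
  obtain ⟨i, rfl⟩ := hxy
  induction i using Int.induction_on with
  | zero => simpa using hr.refl x
  | succ i ih =>
    have : (f ^ ((i : ℤ) + 1)) x = f ((f ^ (i : ℤ)) x) := by
      rw [add_comm, zpow_add, zpow_one, mul_apply]
    rw [this]
    exact hr.trans ih (h _)
  | pred i ih =>
    have h1 : (f ^ (-(i : ℤ))) x = f ((f ^ (-(i : ℤ) - 1)) x) := by
      rw [← mul_apply, ← zpow_one_add]
      congr 2
      ring
    rw [h1] at ih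
    exact hr.trans ih (hr.symm (h _))

/-- Collapse `n` to `m`. -/
def collapse (m n x : ℤ) : ℤ := if x = n then m else x

theorem sameCycle_swap_mul (f : Perm ℤ) (m n : ℤ) (hn : f n = n) (hmn : m ≠ n) (x y : ℤ) :
    (swap m n * f).SameCycle x y ↔ f.SameCycle (collapse m n x) (collapse m n y) := by
  have hgn : (swap m n * f) n = m := by simp [hn]
  constructor
  · intro h
    refine rel_of_sameCycle (swap m n * f)
      (fun x y => f.SameCycle (collapse m n x) (collapse m n y))
      ⟨fun _ => SameCycle.refl _ _, fun h => h.symm, fun h h' => h.trans h'⟩ ?_ h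
    intro x
    by_cases hx : x = n
    · subst hx
      rw [hgn]
      simp [collapse, hmn, SameCycle.refl]
    · have h1 : f x ≠ n := fun h => hx (f.injective (h.trans hn.symm))
      by_cases h2 : f x = m
      · have : (swap m n * f) x = n := by simp [h2]
        rw [this]
        simp only [collapse, hx, if_true, if_false]
        rw [← h2, sameCycle_apply_right]
      · have : (swap m n * f) x = f x := by simp [swap_apply_of_ne_of_ne h2 h1]
        rw [this]
        simp only [collapse, hx, h1, if_false]
        rw [sameCycle_apply_right]
  · intro h
    have h0 : ∀ x, (swap m n * f).SameCycle x (collapse m n x) := by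
      intro x
      by_cases hx : x = n
      · subst hx
        have : collapse m x x = (swap m x * f) x := by rw [hgn]; simp [collapse]
        rw [this, sameCycle_apply_right]
      · simp [collapse, hx, SameCycle.refl]
    refine (h0 x).trans (SameCycle.trans ?_ (h0 y).symm)
    refine rel_of_sameCycle f (fun x y => (swap m n * f).SameCycle x y)
      ⟨fun _ => SameCycle.refl _ _, fun h => h.symm, fun h h' => h.trans h'⟩ ?_ h
    intro x
    by_cases hx : x = n
    · subst hx
      rw [hn]
    · have h1 : f x ≠ n := fun h => hx (f.injective (h.trans hn.symm))
      by_cases h2 : f x = m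
      · have h3 : (swap m n * f) x = n := by simp [h2]
        have : f x = (swap m n * f) ((swap m n * f) x) := by rw [h3, hgn, h2]
        rw [this, sameCycle_apply_right, sameCycle_apply_right]
      · have : (swap m n * f) x = f x := by simp [swap_apply_of_ne_of_ne h2 h1]
        rw [← this, sameCycle_apply_right]

/-- The element taking `n` to `m`. -/
def tt (m n : ℤ) : Perm ℤ :=
  if m = -n then swap m n else swap (-m) (-n) * swap m n

theorem sameCycle_tt_mul (f : Perm ℤ) (m n : ℤ) (hn : f n = n) (hn' : f (-n) = -n)
    (hn0 : n ≠ 0) (h1 : m ≠ n) (h2 : m ≠ -n) (x y : ℤ) :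
    (tt m n * f).SameCycle x y ↔
      f.SameCycle (collapse m n (collapse (-m) (-n) x)) (collapse m n (collapse (-m) (-n) y)) := by
  have h3 : -n ≠ n := by omega
  rw [tt, if_neg h2, mul_assoc, sameCycle_swap_mul _ _ _ _ (by omega),
    sameCycle_swap_mul _ _ _ hn h1]
  simp [hn', swap_apply_of_ne_of_ne h2.symm h3]

/-- The orbit. -/
def orb (g : Perm ℤ) (x : ℤ) : Set ℤ := {j | g.SameCycle x j}

theorem mem_orb {g : Perm ℤ} {x y : ℤ} : y ∈ orb g x ↔ g.SameCycle x y := Iff.rfl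

theorem orb_eq_of_mem {g : Perm ℤ} {x y : ℤ} (h : y ∈ orb g x) : orb g y = orb g x := by
  ext z
  exact ⟨fun h' => SameCycle.trans h h', fun h' => SameCycle.trans (SameCycle.symm h) h'⟩

theorem mem_ntOrbits {g : Perm ℤ} {o : Set ℤ} :
    o ∈ ntOrbits g ↔ ∃ x, g x ≠ x ∧ o = orb g x := Iff.rfl

theorem mem_negSet {o : Set ℤ} {x : ℤ} : x ∈ negSet o ↔ -x ∈ o := by
  constructor
  · rintro ⟨y, hy, rfl⟩
    simpa using hy
  · intro h
    exact ⟨-x, h, by simp⟩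

theorem ncard_negSet (o : Set ℤ) : (negSet o).ncard = o.ncard :=
  Set.ncard_image_of_injective _ neg_injective

theorem negSet_negSet (o : Set ℤ) : negSet (negSet o) = o := by
  ext x; simp [mem_negSet]

theorem sameCycle_neg {g : Perm ℤ} (hg : g ∈ BInfSet) {x y : ℤ} (h : g.SameCycle x y) :
    g.SameCycle (-x) (-y) := by
  refine rel_of_sameCycle g (fun x y => g.SameCycle (-x) (-y))
      ⟨fun _ => SameCycle.refl _ _, fun h => h.symm, fun h h' => h.trans h'⟩ ?_ h
  intro x
  rw [← hg.1, sameCycle_apply_right]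

theorem negSet_orb {g : Perm ℤ} (hg : g ∈ BInfSet) (x : ℤ) :
    negSet (orb g x) = orb g (-x) := by
  ext y
  rw [mem_negSet, mem_orb, mem_orb]
  constructor
  · intro h
    simpa using sameCycle_neg hg h
  · intro h
    simpa using sameCycle_neg hg h

theorem negSet_orb_eq_iff {g : Perm ℤ} (hg : g ∈ BInfSet) (x : ℤ) :
    negSet (orb g x) = orb g x ↔ g.SameCycle x (-x) := by
  rw [negSet_orb hg]
  constructor
  · intro h
    have : -x ∈ orb g (-x) := SameCycle.refl _ _
    rw [h] at this
    exact this
  · intro h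
    exact orb_eq_of_mem h

theorem orb_finite {g : Perm ℤ} (hg : g ∈ BInfSet) (x : ℤ) : (orb g x).Finite := by
  refine (hg.2.union (Set.finite_singleton x)).subset ?_
  intro y hy
  by_cases h : g y = y
  · right
    exact (SameCycle.eq_of_right hy h).symm
  · left
    exact h

theorem ntOrbits_finite {g : Perm ℤ} (hg : g ∈ BInfSet) : (ntOrbits g).Finite := by
  refine (hg.2.image (orb g)).subset ?_
  rintro o ⟨x, hx, rfl⟩
  exact ⟨x, hx, rfl⟩

/-- Nontrivial orbits avoiding `±m`. -/
def rest (g : Perm ℤ) (m : ℤ) : Set (Set ℤ) := {o ∈ ntOrbits g | m ∉ o ∧ -m ∉ o}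

def sPos (R : Set (Set ℤ)) : ℕ := ∑ᶠ O ∈ {O ∈ R | negSet O ≠ O}, (O.ncard - 1)
def sNeg (R : Set (Set ℤ)) : ℕ := ∑ᶠ O ∈ {O ∈ R | negSet O = O}, (O.ncard / 2 - 1)
def cNeg (R : Set (Set ℤ)) : ℕ := {O ∈ R | negSet O = O}.ncard

theorem expPlus_eq (g : Perm ℤ) : expPlus g = sPos (ntOrbits g) / 2 + sNeg (ntOrbits g) := rfl
theorem negCount_eq (g : Perm ℤ) : negCount g = cNeg (ntOrbits g) := rfl

theorem ntOrbits_of_fixed {g : Perm ℤ} (hg : g ∈ BInfSet) {m : ℤ} (h : g m = m) :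
    ntOrbits g = rest g m := by
  ext o
  refine ⟨fun ho => ⟨ho, ?_⟩, fun ho => ho.1⟩
  obtain ⟨x, hx, rfl⟩ := ho
  have h' : g (-m) = -m := by rw [hg.1, h]
  constructor
  · intro hm
    have := SameCycle.eq_of_right hm h
    subst this
    exact hx h
  · intro hm
    have := SameCycle.eq_of_right hm h'
    subst this
    exact hx h'

theorem ntOrbits_of_not_fixed {g : Perm ℤ} (hg : g ∈ BInfSet) {m : ℤ} (h : g m ≠ m) :
    ntOrbits g = rest g m ∪ {orb g m, negSet (orb g m)} := by
  ext o
  have h' : g (-m) ≠ -m := by rw [hg.1]; simpa using h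
  rw [negSet_orb hg]
  constructor
  · intro ho
    by_cases h1 : m ∈ o
    · right; left
      obtain ⟨x, hx, rfl⟩ := ho
      exact (orb_eq_of_mem h1).symm
    by_cases h2 : -m ∈ o
    · right; right
      obtain ⟨x, hx, rfl⟩ := ho
      exact (orb_eq_of_mem h2).symm
    exact Or.inl ⟨ho, h1, h2⟩
  · rintro (ho | rfl | rfl)
    · exact ho.1
    · exact ⟨m, h, rfl⟩
    · exact ⟨-m, h', rfl⟩

theorem rest_finite {g : Perm ℤ} (hg : g ∈ BInfSet) (m : ℤ) : (rest g m).Finite :=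
  (ntOrbits_finite hg).subset fun _ h => h.1

theorem decomp_pos {g : Perm ℤ} (hg : g ∈ BInfSet) {m : ℤ}
    (hO : negSet (orb g m) ≠ orb g m) :
    sPos (ntOrbits g) = sPos (rest g m) + 2 * ((orb g m).ncard - 1) ∧
    sNeg (ntOrbits g) = sNeg (rest g m) ∧ cNeg (ntOrbits g) = cNeg (rest g m) := by
  by_cases h : g m = m
  · rw [← ntOrbits_of_fixed hg h]
    have : orb g m = {m} := by
      ext y
      refine ⟨fun hy => (SameCycle.eq_of_left hy h).symm, ?_⟩
      rintro rfl
      exact SameCycle.refl _ _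
    simp [this]
  · have hm1 : m ∈ orb g m := SameCycle.refl _ _
    have hm2 : -m ∈ negSet (orb g m) := by rw [mem_negSet]; simpa using hm1
    have hneg : {O ∈ ntOrbits g | negSet O = O} = {O ∈ rest g m | negSet O = O} := by
      rw [ntOrbits_of_not_fixed hg h]
      ext o
      constructor
      · rintro ⟨h1 | rfl | rfl, h2⟩
        · exact ⟨h1, h2⟩
        · exact absurd h2 hO
        · rw [negSet_negSet] at h2
          exact absurd h2.symm hO
      · rintro ⟨h1, h2⟩
        exact ⟨Or.inl h1, h2⟩
    have hpos : {O ∈ ntOrbits g | negSet O ≠ O} =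
        {O ∈ rest g m | negSet O ≠ O} ∪ {orb g m, negSet (orb g m)} := by
      rw [ntOrbits_of_not_fixed hg h]
      ext o
      constructor
      · rintro ⟨h1 | h1, h2⟩
        · exact Or.inl ⟨h1, h2⟩
        · exact Or.inr h1
      · rintro (⟨h1, h2⟩ | rfl | rfl)
        · exact ⟨Or.inl h1, h2⟩
        · exact ⟨Or.inr (Or.inl rfl), hO⟩
        · refine ⟨Or.inr (Or.inr rfl), ?_⟩
          rw [negSet_negSet]
          exact hO.symm
    refine ⟨?_, ?_, ?_⟩
    · rw [sPos, hpos, finsum_mem_union _ ((rest_finite hg m).subset fun _ h => h.1)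
        (Set.toFinite _), finsum_mem_pair hO.symm, ncard_negSet, two_mul, sPos]
      rw [Set.disjoint_left]
      rintro o ⟨h1, h2⟩ (rfl | rfl)
      · exact h1.2.1 hm1
      · exact h1.2.2 hm2
    · rw [sNeg, hneg, sNeg]
    · rw [cNeg, hneg, cNeg]

theorem decomp_neg {g : Perm ℤ} (hg : g ∈ BInfSet) {m : ℤ} (hm : m ≠ 0)
    (hO : negSet (orb g m) = orb g m) :
    sPos (ntOrbits g) = sPos (rest g m) ∧
    sNeg (ntOrbits g) = sNeg (rest g m) + ((orb g m).ncard / 2 - 1) ∧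
    cNeg (ntOrbits g) = cNeg (rest g m) + 1 := by
  have h : g m ≠ m := by
    intro h
    have := SameCycle.eq_of_left ((negSet_orb_eq_iff hg m).1 hO) h
    omega
  have hm1 : m ∈ orb g m := SameCycle.refl _ _
  have hpos : {O ∈ ntOrbits g | negSet O ≠ O} = {O ∈ rest g m | negSet O ≠ O} := by
    rw [ntOrbits_of_not_fixed hg h]
    ext o
    constructor
    · rintro ⟨h1 | rfl | rfl, h2⟩
      · exact ⟨h1, h2⟩
      · exact absurd hO h2
      · rw [negSet_negSet] at h2
        exact absurd hO.symm h2
    · rintro ⟨h1, h2⟩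
      exact ⟨Or.inl h1, h2⟩
  have hneg : {O ∈ ntOrbits g | negSet O = O} =
      insert (orb g m) {O ∈ rest g m | negSet O = O} := by
    rw [ntOrbits_of_not_fixed hg h, hO]
    ext o
    constructor
    · rintro ⟨h1 | h1 | h1, h2⟩
      · exact Or.inr ⟨h1, h2⟩
      · exact Or.inl h1
      · exact Or.inl h1
    · rintro (rfl | ⟨h1, h2⟩)
      · exact ⟨Or.inr (Or.inl rfl), hO⟩
      · exact ⟨Or.inl h1, h2⟩
  have hfin : {O ∈ rest g m | negSet O = O}.Finite := (rest_finite hg m).subset fun _ h => h.1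
  have hnot : orb g m ∉ {O ∈ rest g m | negSet O = O} := fun h => h.1.2.1 hm1
  refine ⟨?_, ?_, ?_⟩
  · rw [sPos, hpos, sPos]
  · rw [sNeg, hneg, finsum_mem_insert _ hnot hfin, sNeg, add_comm]
  · rw [cNeg, hneg, Set.ncard_insert_of_notMem hnot hfin, cNeg]

theorem ne_iff_exists_sameCycle {g : Perm ℤ} {x : ℤ} :
    g x ≠ x ↔ ∃ y, y ≠ x ∧ g.SameCycle x y := by
  constructor
  · intro h
    exact ⟨g x, h, by rw [sameCycle_apply_right]⟩
  · rintro ⟨y, hy, h⟩ h'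
    exact hy (SameCycle.eq_of_left h h').symm

theorem rest_eq {f g : Perm ℤ} {m n : ℤ} (κ : ℤ → ℤ)
    (hκ : ∀ x y, g.SameCycle x y ↔ f.SameCycle (κ x) (κ y))
    (h1 : ∀ x, x ≠ n → x ≠ -n → κ x = x)
    (h2 : κ n = m ∨ κ n = -m) (h3 : κ (-n) = m ∨ κ (-n) = -m)
    (h4 : ∀ x, κ (κ x) = κ x) (hf : f n = n) (hf' : f (-n) = -n) :
    rest g m = rest f m := by
  have key : ∀ x, x ≠ n → x ≠ -n → m ∉ orb f x → -m ∉ orb f x → orb g x = orb f x := by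
    intro x hx hx' hm hm'
    ext y
    rw [mem_orb, mem_orb, hκ, h1 x hx hx']
    by_cases hy : y = n
    · subst hy
      have a : ¬ f.SameCycle x (κ y) := by
        rcases h2 with h | h <;> rw [h] <;> assumption
      have b : ¬ f.SameCycle x y := fun h => hx (SameCycle.eq_of_right h hf)
      tauto
    by_cases hy' : y = -n
    · subst hy'
      have a : ¬ f.SameCycle x (κ (-n)) := by
        rcases h3 with h | h <;> rw [h] <;> assumption
      have b : ¬ f.SameCycle x (-n) := fun h => hx' (SameCycle.eq_of_right h hf')
      tauto
    rw [h1 y hy hy']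
  have hgκ : ∀ x, g.SameCycle x (κ x) := fun x => by rw [hκ, h4]
  have fin : ∀ x, orb g x = orb f x → (g x ≠ x ↔ f x ≠ x) := by
    intro x h
    rw [ne_iff_exists_sameCycle, ne_iff_exists_sameCycle]
    have : ∀ y, g.SameCycle x y ↔ f.SameCycle x y := fun y => Set.ext_iff.1 h y
    simp only [this]
  ext o
  constructor
  · rintro ⟨⟨x, hx, rfl⟩, hm, hm'⟩
    change m ∉ orb g x at hm
    change -m ∉ orb g x at hm'
    have hxn : x ≠ n := by
      rintro rfl
      have := hgκ x
      rcases h2 with h | h <;> rw [h] at this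
      · exact hm this
      · exact hm' this
    have hxn' : x ≠ -n := by
      rintro rfl
      have := hgκ (-n)
      rcases h3 with h | h <;> rw [h] at this
      · exact hm this
      · exact hm' this
    have aux : ∀ c, c ∉ orb g x → c ∉ orb f x := by
      intro c hc hc'
      by_cases e1 : c = n
      · subst e1
        exact hxn (SameCycle.eq_of_right hc' hf)
      by_cases e2 : c = -n
      · subst e2
        exact hxn' (SameCycle.eq_of_right hc' hf')
      apply hc
      rw [mem_orb, hκ, h1 x hxn hxn', h1 c e1 e2]
      exact hc'
    have e := key x hxn hxn' (aux _ hm) (aux _ hm')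
    exact ⟨⟨x, (fin x e).1 hx, e⟩, hm, hm'⟩
  · rintro ⟨⟨x, hx, rfl⟩, hm, hm'⟩
    have hxn : x ≠ n := by rintro rfl; exact hx hf
    have hxn' : x ≠ -n := by rintro rfl; exact hx hf'
    have e := key x hxn hxn' hm hm'
    exact ⟨⟨x, (fin x e).2 hx, e.symm⟩, hm, hm'⟩

theorem BInf_one : (1 : Perm ℤ) ∈ BInfSet := by
  refine ⟨fun i => rfl, ?_⟩
  simp

theorem BInf_mul {g h : Perm ℤ} (hg : g ∈ BInfSet) (hh : h ∈ BInfSet) : g * h ∈ BInfSet := by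
  refine ⟨fun i => by simp [hh.1, hg.1], (hg.2.union hh.2).subset ?_⟩
  intro i hi
  by_contra hc
  simp only [Set.mem_union, Set.mem_ofPred_eq, not_or, not_not] at hc
  apply hi
  rw [mul_apply, hc.2, hc.1]

theorem tt_odd {m n : ℤ} (hm : m ≠ 0) (hn : n ≠ 0) (i : ℤ) : tt m n (-i) = -tt m n i := by
  unfold tt
  split_ifs with h
  · subst h
    simp only [swap_apply_def]
    split_ifs <;> omega
  · simp only [mul_apply, swap_apply_def]
    split_ifs <;> omega

theorem tt_fix {m n i : ℤ} (h1 : i ≠ m) (h2 : i ≠ n) (h3 : i ≠ -m) (h4 : i ≠ -n) :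
    tt m n i = i := by
  unfold tt
  split_ifs with h
  · simp [swap_apply_of_ne_of_ne h1 h2]
  · simp [swap_apply_of_ne_of_ne h1 h2, swap_apply_of_ne_of_ne h3 h4]

theorem tt_mem {m n : ℤ} (hm : m ≠ 0) (hn : n ≠ 0) : tt m n ∈ BInfSet := by
  refine ⟨tt_odd hm hn, (Set.toFinite ({m, n, -m, -n} : Set ℤ)).subset ?_⟩
  intro i hi
  by_contra hc
  simp only [Set.mem_insert_iff, Set.mem_singleton_iff, not_or] at hc
  exact hi (tt_fix hc.1 hc.2.1 hc.2.2.1 hc.2.2.2)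

theorem tt_apply {m n : ℤ} (hm : m ≠ 0) (hn : n ≠ 0) : tt m n n = m := by
  unfold tt
  split_ifs with h
  · simp
  · simp only [mul_apply, swap_apply_right]
    rw [swap_apply_of_ne_of_ne] <;> omega

theorem tt_self {n : ℤ} (hn : n ≠ 0) : tt n n = 1 := by
  unfold tt
  rw [if_neg (by omega)]
  ext i
  simp

/-- The weights. -/
def ww (qp qm : ℂ) (m n : ℤ) : ℂ := if m = n then 1 else if m = -n then qm else qp

theorem phi_tt (qp qm : ℂ) {f : Perm ℤ} (hf : f ∈ BInfSet) {m n : ℤ} (hm : m ≠ 0) (hn : n ≠ 0)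
    (hfn : f n = n) : phi qp qm (tt m n * f) = ww qp qm m n * phi qp qm f := by
  have hfn' : f (-n) = -n := by rw [hf.1, hfn]
  unfold ww
  split_ifs with h1 h2
  · subst h1
    rw [tt_self hn]
    simp
  · subst h2
    have hg : tt (-n) n * f ∈ BInfSet := BInf_mul (tt_mem hm hn) hf
    have hκ : ∀ x y, (tt (-n) n * f).SameCycle x y ↔
        f.SameCycle (collapse (-n) n x) (collapse (-n) n y) := by
      intro x y
      rw [tt, if_pos rfl]
      exact sameCycle_swap_mul f (-n) n hfn h1 x y
    have hr : rest (tt (-n) n * f) (-n) = rest f (-n) := by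
      refine rest_eq (n := n) (collapse (-n) n) hκ ?_ ?_ ?_ ?_ hfn hfn'
      · intro x hx _
        simp [collapse, hx]
      · simp [collapse]
      · simp [collapse]
      · intro x
        simp only [collapse]
        split_ifs <;> simp_all
    have ho : orb (tt (-n) n * f) (-n) = {n, -n} := by
      ext y
      rw [mem_orb, hκ]
      simp only [collapse, h1, if_false]
      constructor
      · intro h
        have := SameCycle.eq_of_left h hfn'
        simp only [Set.mem_insert_iff, Set.mem_singleton_iff]
        split_ifs at this with h
        · exact Or.inl h
        · exact Or.inr this.symm
      · rintro (rfl | rfl)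
        · simp [SameCycle.refl]
        · simp [h1, SameCycle.refl]
    have hs : negSet (orb (tt (-n) n * f) (-n)) = orb (tt (-n) n * f) (-n) := by
      rw [ho]
      ext y
      simp only [mem_negSet, Set.mem_insert_iff, Set.mem_singleton_iff]
      omega
    obtain ⟨e1, e2, e3⟩ := decomp_neg hg hm hs
    rw [ho, Set.ncard_pair (Ne.symm h1), hr, ← ntOrbits_of_fixed hf hfn'] at e2
    rw [hr, ← ntOrbits_of_fixed hf hfn'] at e1 e3
    rw [phi, phi, expPlus_eq, negCount_eq, expPlus_eq, negCount_eq, e1, e2, e3]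
    simp only [Nat.reduceDiv, Nat.sub_self, add_zero]
    ring
  · have hg : tt m n * f ∈ BInfSet := BInf_mul (tt_mem hm hn) hf
    set κ : ℤ → ℤ := fun x => collapse m n (collapse (-m) (-n) x) with hκdef
    have hκ : ∀ x y, (tt m n * f).SameCycle x y ↔ f.SameCycle (κ x) (κ y) :=
      sameCycle_tt_mul f m n hfn hfn' hn h1 h2
    have k1 : ∀ x, x ≠ n → x ≠ -n → κ x = x := by
      intro x hx hx'
      simp [hκdef, collapse, hx, hx']
    have k2 : κ n = m := by
      simp only [hκdef, collapse]
      split_ifs <;> omega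
    have k3 : κ (-n) = -m := by
      simp only [hκdef, collapse]
      split_ifs <;> omega
    have k4 : ∀ x, κ (κ x) = κ x := by
      intro x
      by_cases hx : x = n
      · subst hx
        rw [k2, k1 m h1 h2]
      by_cases hx' : x = -n
      · subst hx'
        rw [k3, k1 (-m) (by omega) (by omega)]
      rw [k1 x hx hx', k1 x hx hx']
    have hr : rest (tt m n * f) m = rest f m :=
      rest_eq κ hκ k1 (Or.inl k2) (Or.inr k3) k4 hfn hfn'
    have hs : negSet (orb (tt m n * f) m) = orb (tt m n * f) m ↔
        negSet (orb f m) = orb f m := by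
      rw [negSet_orb_eq_iff hg, negSet_orb_eq_iff hf, hκ, k1 m h1 h2,
        k1 (-m) (by omega) (by omega)]
    have hmem : ∀ y, y ∈ orb (tt m n * f) m ↔ κ y ∈ orb f m := by
      intro y
      rw [mem_orb, hκ, k1 m h1 h2, mem_orb]
    have hnO : n ∉ orb f m := fun h => h1 (SameCycle.eq_of_right h hfn)
    have hnO' : -n ∉ orb f m := fun h => h2 (SameCycle.eq_of_right h hfn')
    have hmO : m ∈ orb f m := SameCycle.refl _ _
    have hfin := orb_finite hf m
    by_cases hsf : negSet (orb f m) = orb f m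
    · have hmO' : -m ∈ orb f m := (negSet_orb_eq_iff hf m).1 hsf
      have ho : orb (tt m n * f) m = insert n (insert (-n) (orb f m)) := by
        ext y
        rw [hmem]
        by_cases hy : y = n
        · subst hy
          simp [k2, hmO]
        by_cases hy' : y = -n
        · subst hy'
          simp [k3, hmO']
        simp [k1 y hy hy', hy, hy']
      have hc : (orb (tt m n * f) m).ncard = (orb f m).ncard + 2 := by
        rw [ho, Set.ncard_insert_of_notMem _ (hfin.insert _),
          Set.ncard_insert_of_notMem hnO' hfin]
        simp only [Set.mem_insert_iff, not_or]
        exact ⟨by omega, hnO⟩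
      have hc2 : 2 ≤ (orb f m).ncard := by
        rw [← Set.ncard_pair (show m ≠ -m by omega)]
        refine Set.ncard_le_ncard ?_ hfin
        rintro y (rfl | rfl)
        · exact hmO
        · exact hmO'
      obtain ⟨e1, e2, e3⟩ := decomp_neg hg hm (hs.2 hsf)
      obtain ⟨e1', e2', e3'⟩ := decomp_neg hf hm hsf
      have hE : expPlus (tt m n * f) = expPlus f + 1 := by
        rw [expPlus_eq, expPlus_eq, e1, e2, e1', e2', hr, hc]
        omega
      have hN : negCount (tt m n * f) = negCount f := by
        rw [negCount_eq, negCount_eq, e3, e3', hr]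
      rw [phi, phi, hE, hN]
      ring
    · have hmO' : -m ∉ orb f m := fun h => hsf ((negSet_orb_eq_iff hf m).2 h)
      have ho : orb (tt m n * f) m = insert n (orb f m) := by
        ext y
        rw [hmem]
        by_cases hy : y = n
        · subst hy
          simp [k2, hmO]
        by_cases hy' : y = -n
        · subst hy'
          simp [k3, hmO', hy, hnO']
        simp [k1 y hy hy', hy]
      have hc : (orb (tt m n * f) m).ncard = (orb f m).ncard + 1 := by
        rw [ho, Set.ncard_insert_of_notMem hnO hfin]
      have hc2 : 1 ≤ (orb f m).ncard := by
        rw [Nat.one_le_iff_ne_zero, ← Nat.pos_iff_ne_zero, Set.ncard_pos hfin]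
        exact ⟨m, hmO⟩
      obtain ⟨e1, e2, e3⟩ := decomp_pos hg (fun h => hsf (hs.1 h))
      obtain ⟨e1', e2', e3'⟩ := decomp_pos hf hsf
      have hE : expPlus (tt m n * f) = expPlus f + 1 := by
        rw [expPlus_eq, expPlus_eq, e1, e2, e1', e2', hr, hc]
        omega
      have hN : negCount (tt m n * f) = negCount f := by
        rw [negCount_eq, negCount_eq, e3, e3', hr]
      rw [phi, phi, hE, hN]
      ring

theorem phi_one (qp qm : ℂ) : phi qp qm 1 = 1 := by
  have : ntOrbits (1 : Perm ℤ) = ∅ := by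
    ext o
    simp [mem_ntOrbits]
  simp [phi, expPlus, negCount, posOrbits, negOrbits, this]

/-- The finite hyperoctahedral groups. -/
def Bs (N : ℕ) : Subgroup (Perm ℤ) where
  carrier := {g | (∀ i, g (-i) = -g i) ∧ ∀ i : ℤ, N < i.natAbs → g i = i}
  mul_mem' := by
    rintro g h ⟨h1, h2⟩ ⟨h3, h4⟩
    exact ⟨fun i => by simp [h1, h3], fun i hi => by rw [mul_apply, h4 i hi, h2 i hi]⟩
  one_mem' := ⟨fun i => rfl, fun i _ => rfl⟩
  inv_mem' := by
    rintro g ⟨h1, h2⟩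
    refine ⟨fun i => ?_, fun i hi => ?_⟩
    · rw [inv_eq_iff_eq, h1]
      simp
    · rw [inv_eq_iff_eq, h2 i hi]

theorem mem_Bs {N : ℕ} {g : Perm ℤ} :
    g ∈ Bs N ↔ (∀ i, g (-i) = -g i) ∧ ∀ i : ℤ, N < i.natAbs → g i = i := Iff.rfl

theorem Bs_mono {N N' : ℕ} (h : N ≤ N') : Bs N ≤ Bs N' := by
  rintro g ⟨h1, h2⟩
  exact ⟨h1, fun i hi => h2 i (by omega)⟩

theorem Bs_sub {N : ℕ} {g : Perm ℤ} (h : g ∈ Bs N) : g ∈ BInfSet := by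
  refine ⟨h.1, (Set.finite_Icc (-(N : ℤ)) N).subset ?_⟩
  intro i hi
  by_contra hc
  apply hi
  apply h.2
  simp only [Set.mem_Icc] at hc
  omega

theorem exists_Bs {g : Perm ℤ} (hg : g ∈ BInfSet) : ∃ N, g ∈ Bs N := by
  obtain ⟨N, hN⟩ := (hg.2.image Int.natAbs).bddAbove
  refine ⟨N, hg.1, fun i hi => ?_⟩
  by_contra hc
  have := hN ⟨i, hc, rfl⟩
  omega

theorem Bs_zero_apply {N : ℕ} {g : Perm ℤ} (h : g ∈ Bs N) : g 0 = 0 := by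
  have := h.1 0
  simp only [neg_zero] at this
  omega

theorem Bs_natAbs_le {N : ℕ} {g : Perm ℤ} (h : g ∈ Bs N) {i : ℤ} (hi : i.natAbs ≤ N) :
    (g i).natAbs ≤ N := by
  by_contra hc
  have := g.injective (h.2 (g i) (by omega))
  rw [this] at hc
  omega

theorem Bs_apply_ne {N : ℕ} {g : Perm ℤ} (h : g ∈ Bs N) {i : ℤ} (hi : i ≠ 0) : g i ≠ 0 := by
  intro hc
  exact hi (g.injective (hc.trans (Bs_zero_apply h).symm))

theorem tt_mem_Bs {N : ℕ} {m n : ℤ} (hm : m ≠ 0) (hn : n ≠ 0) (hm' : m.natAbs ≤ N)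
    (hn' : n.natAbs ≤ N) : tt m n ∈ Bs N :=
  ⟨tt_odd hm hn, fun i hi => tt_fix (by omega) (by omega) (by omega) (by omega)⟩

theorem Bs_of_fix {N : ℕ} {g : Perm ℤ} (h : g ∈ Bs (N + 1)) (h' : g ((N + 1 : ℕ) : ℤ) = (N + 1 : ℕ)) :
    g ∈ Bs N := by
  refine ⟨h.1, fun i hi => ?_⟩
  by_cases h1 : N + 1 < i.natAbs
  · exact h.2 i h1
  · have : i = (N + 1 : ℕ) ∨ i = -((N + 1 : ℕ) : ℤ) := by omega
    rcases this with rfl | rfl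
    · exact h'
    · rw [h.1, h']

theorem Bs_zero {g : Perm ℤ} (h : g ∈ Bs 0) : g = 1 := by
  ext i
  by_cases hi : i = 0
  · subst hi
    rw [Bs_zero_apply h]
    rfl
  · rw [h.2 i (by omega)]
    rfl

/-- Possible images of `N+1`. -/
def mset (N : ℕ) : Finset ℤ := (Finset.Icc (-((N + 1 : ℕ) : ℤ)) ((N + 1 : ℕ) : ℤ)).erase 0

theorem mem_mset {N : ℕ} {m : ℤ} : m ∈ mset N ↔ m ≠ 0 ∧ m.natAbs ≤ N + 1 := by
  simp only [mset, Finset.mem_erase, Finset.mem_Icc]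
  omega

theorem Bs_fixN {N : ℕ} {g : Perm ℤ} (h : g ∈ Bs N) :
    g ((N + 1 : ℕ) : ℤ) = (N + 1 : ℕ) := h.2 _ (by omega)

theorem tt_mul_mem {N : ℕ} {m : ℤ} (hm : m ∈ mset N) {g : Perm ℤ} (h : g ∈ Bs N) :
    tt m ((N + 1 : ℕ) : ℤ) * g ∈ Bs (N + 1) := by
  rw [mem_mset] at hm
  exact mul_mem (tt_mem_Bs hm.1 (by omega) hm.2 (by omega)) (Bs_mono (by omega) h)

theorem Bs_decomp {N : ℕ} {g : Perm ℤ} (h : g ∈ Bs (N + 1)) :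
    g ((N + 1 : ℕ) : ℤ) ∈ mset N ∧
    (tt (g ((N + 1 : ℕ) : ℤ)) ((N + 1 : ℕ) : ℤ))⁻¹ * g ∈ Bs N := by
  have h1 : g ((N + 1 : ℕ) : ℤ) ∈ mset N := by
    rw [mem_mset]
    exact ⟨Bs_apply_ne h (by omega), Bs_natAbs_le h (by omega)⟩
  refine ⟨h1, ?_⟩
  rw [mem_mset] at h1
  apply Bs_of_fix
  · exact mul_mem (inv_mem (tt_mem_Bs h1.1 (by omega) h1.2 (by omega))) h
  · rw [mul_apply, inv_eq_iff_eq, tt_apply h1.1 (by omega)]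

instance Bs_finite (N : ℕ) : Finite (Bs N) := by
  induction N with
  | zero =>
    refine Set.Finite.to_subtype ((Set.finite_singleton (1 : Perm ℤ)).subset ?_)
    intro g hg
    exact Bs_zero hg
  | succ N ih =>
    refine Set.Finite.to_subtype (Set.Finite.subset
      (Set.Finite.image2 (fun m g => tt m ((N + 1 : ℕ) : ℤ) * g) (mset N).finite_toSet
        (Set.toFinite (Bs N : Set (Perm ℤ)))) ?_)
    intro g hg
    obtain ⟨h1, h2⟩ := Bs_decomp hg
    exact ⟨_, h1, _, h2, by simp⟩

instance Bs_fintype (N : ℕ) : Fintype (Bs N) := Fintype.ofFinite _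

theorem sum_Bs_succ (N : ℕ) (F : Perm ℤ → ℂ) :
    ∑ g : Bs (N + 1), F g = ∑ m ∈ mset N, ∑ g : Bs N, F (tt m ((N + 1 : ℕ) : ℤ) * g) := by
  rw [← Finset.sum_product']
  symm
  refine Finset.sum_bij' (fun p hp => ⟨tt p.1 ((N + 1 : ℕ) : ℤ) * p.2.1,
      tt_mul_mem (Finset.mem_product.1 hp).1 p.2.2⟩)
    (fun g _ => (g.1 ((N + 1 : ℕ) : ℤ), ⟨_, (Bs_decomp g.2).2⟩)) ?_ ?_ ?_ ?_ ?_
  · intro p hp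
    simp
  · intro g _
    simp only [Finset.mem_product, Finset.mem_univ, and_true]
    exact (Bs_decomp g.2).1
  · rintro ⟨m, g, hg⟩ hp
    have h1 := (mem_mset.1 (Finset.mem_product.1 hp).1).1
    have h2 : (tt m ((N + 1 : ℕ) : ℤ) * g) ((N + 1 : ℕ) : ℤ) = m := by
      rw [mul_apply, Bs_fixN hg, tt_apply h1 (by omega)]
    simp only [Prod.mk.injEq, Subtype.mk.injEq]
    refine ⟨h2, ?_⟩
    rw [h2]
    simp
  · intro g _
    apply Subtype.ext
    simp
  · intro p hp
    rfl

theorem sum_ww (qp qm : ℂ) (N : ℕ) :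
    ∑ m ∈ mset N, ww qp qm m ((N + 1 : ℕ) : ℤ) = 1 + qm + 2 * N * qp := by
  have h1 : ((N + 1 : ℕ) : ℤ) ∈ mset N := by rw [mem_mset]; omega
  have h2 : -((N + 1 : ℕ) : ℤ) ∈ (mset N).erase ((N + 1 : ℕ) : ℤ) := by
    rw [Finset.mem_erase, mem_mset]; omega
  rw [← Finset.add_sum_erase _ _ h1, ← Finset.add_sum_erase _ _ h2]
  have h3 : ∀ m ∈ ((mset N).erase ((N + 1 : ℕ) : ℤ)).erase (-((N + 1 : ℕ) : ℤ)),
      ww qp qm m ((N + 1 : ℕ) : ℤ) = qp := by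
    intro m hm
    rw [Finset.mem_erase, Finset.mem_erase] at hm
    rw [ww, if_neg hm.2.1, if_neg hm.1]
  rw [Finset.sum_congr rfl h3, Finset.sum_const, Finset.card_erase_of_mem h2,
    Finset.card_erase_of_mem h1, mset, Finset.card_erase_of_mem (by rw [Finset.mem_Icc]; omega),
    Int.card_Icc]
  have h4 : (((N + 1 : ℕ) : ℤ) + 1 - -((N + 1 : ℕ) : ℤ)).toNat - 1 - 1 - 1 = 2 * N := by omega
  rw [h4, ww, if_pos rfl, ww, if_neg (by omega), if_pos rfl, nsmul_eq_mul]
  push_cast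
  ring

theorem natAbs_apply {N : ℕ} {g : Perm ℤ} (hg : g ∈ Bs N) (k : ℤ) :
    (g (k.natAbs : ℤ)).natAbs = (g k).natAbs := by
  rcases Int.natAbs_eq k with h | h
  · rw [← h]
  · have : ((k.natAbs : ℕ) : ℤ) = -k := by omega
    rw [this, hg.1, Int.natAbs_neg]

/-- The underlying permutation. -/
def ab {N : ℕ} (g : Bs N) : Perm (Fin (N + 1)) where
  toFun i := ⟨(g.1 (i : ℕ)).natAbs, Nat.lt_succ_of_le (Bs_natAbs_le g.2 (by have := i.2; omega))⟩
  invFun i := ⟨((g⁻¹).1 (i : ℕ)).natAbs,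
    Nat.lt_succ_of_le (Bs_natAbs_le (g⁻¹).2 (by have := i.2; omega))⟩
  left_inv i := by
    apply Fin.ext
    simp only
    rw [natAbs_apply (g⁻¹).2]
    simp
  right_inv i := by
    apply Fin.ext
    simp only
    rw [natAbs_apply g.2]
    simp

theorem ab_val {N : ℕ} (g : Bs N) (i : Fin (N + 1)) :
    ((ab g i : Fin (N + 1)) : ℕ) = (g.1 (i : ℕ)).natAbs := rfl

/-- The signs. -/
def eps {N : ℕ} (g : Bs N) (i : Fin (N + 1)) : ℤˣ := if g.1 (i : ℕ) < 0 then -1 else 1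

theorem ab_mul {N : ℕ} (g h : Bs N) : ab (g * h) = ab g * ab h := by
  ext i
  rw [ab_val, mul_apply, ab_val, ab_val, natAbs_apply g.2]
  rfl

theorem eps_mul {N : ℕ} (g h : Bs N) (i : Fin (N + 1)) :
    eps (g * h) i = eps g (ab h i) * eps h i := by
  unfold eps
  rw [ab_val]
  have h1 : (g * h).1 (i : ℕ) = g.1 (h.1 (i : ℕ)) := rfl
  rw [h1]
  by_cases h2 : h.1 (i : ℕ) < 0
  · have h3 : ((h.1 (i : ℕ)).natAbs : ℤ) = -(h.1 (i : ℕ)) := by omega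
    have h4 : g.1 (h.1 (i : ℕ)) ≠ 0 := Bs_apply_ne g.2 (by omega)
    rw [h3, g.2.1, if_pos h2]
    by_cases h5 : g.1 (h.1 (i : ℕ)) < 0
    · rw [if_pos h5, if_neg (by omega)]
      simp
    · rw [if_neg h5, if_pos (by omega)]
      simp
  · have h3 : ((h.1 (i : ℕ)).natAbs : ℤ) = h.1 (i : ℕ) := by omega
    rw [h3, if_neg h2, mul_one]

theorem ab_one {N : ℕ} : ab (1 : Bs N) = 1 := by
  ext i
  rw [ab_val]
  simp

theorem eps_one {N : ℕ} (i : Fin (N + 1)) : eps (1 : Bs N) i = 1 := by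
  unfold eps
  rw [if_neg]
  simp

def chiA (N : ℕ) : Bs N →* ℤˣ where
  toFun g := sign (ab g)
  map_one' := by rw [ab_one, map_one]
  map_mul' g h := by rw [ab_mul, map_mul]

def chiB (N : ℕ) : Bs N →* ℤˣ where
  toFun g := ∏ i, eps g i
  map_one' := by simp [eps_one]
  map_mul' g h := by
    simp only [eps_mul]
    rw [Finset.prod_mul_distrib, Equiv.prod_comp (ab h) (eps g)]

theorem ab_tt {N : ℕ} {m : ℤ} {n : ℕ} (t : Bs N) (ht : t.1 = tt m n) (hm : m ≠ 0) (hn : n ≠ 0)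
    (hm' : m.natAbs < N + 1) (hn' : n < N + 1) : ab t = swap ⟨m.natAbs, hm'⟩ ⟨n, hn'⟩ := by
  ext i
  rw [ab_val, ht]
  obtain ⟨i, hi⟩ := i
  simp only [swap_apply_def, Fin.mk.injEq, tt]
  split_ifs <;> simp only [mul_apply, swap_apply_def] <;> split_ifs <;> omega

theorem eps_tt {N : ℕ} {m : ℤ} {n : ℕ} (t : Bs N) (ht : t.1 = tt m n) (hm : m ≠ 0) (hn : n ≠ 0)
    (i : Fin (N + 1)) :
    eps t i = if m < 0 ∧ ((i : ℕ) = m.natAbs ∨ (i : ℕ) = n) then -1 else 1 := by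
  unfold eps
  rw [ht]
  obtain ⟨i, hi⟩ := i
  have : tt m n (i : ℕ) < 0 ↔ (m < 0 ∧ (i = m.natAbs ∨ i = n)) := by
    simp only [tt]
    split_ifs <;> simp only [mul_apply, swap_apply_def] <;> split_ifs <;> omega
  simp only [this]

/-- The character has the prescribed values on the reflections. -/
def HasVals {N : ℕ} (χ : Bs N →* ℤˣ) (a b : ℤ) : Prop :=
  ∀ (t : Bs N) (m : ℤ) (n : ℕ), t.1 = tt m n → m ≠ 0 → n ≠ 0 → m.natAbs ≤ N → n ≤ N →
    (((χ t : ℤˣ) : ℤ) : ℂ) = ww a b m n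

theorem hasVals_one (N : ℕ) : HasVals (1 : Bs N →* ℤˣ) 1 1 := by
  intro t m n _ _ _ _ _
  simp [ww]

theorem hasVals_A (N : ℕ) : HasVals (chiA N) (-1) 1 := by
  intro t m n ht hm hn hm' hn'
  have : chiA N t = sign (ab t) := rfl
  rw [this, ab_tt t ht hm hn (by omega) (by omega), ww]
  split_ifs with h1 h2
  · subst h1
    simp
  · subst h2
    simp
  · rw [sign_swap]
    · simp
    · intro h
      rw [Fin.mk.injEq] at h
      omega

theorem hasVals_B (N : ℕ) : HasVals (chiB N) 1 (-1) := by
  intro t m n ht hm hn hm' hn'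
  have : chiB N t = ∏ i, eps t i := rfl
  rw [this]
  simp only [eps_tt t ht hm hn]
  rw [Finset.prod_ite]
  simp only [Finset.prod_const, ww]
  split_ifs with h1 h2
  · rw [Finset.filter_false_of_mem]
    · simp
    · intro i _
      omega
  · have : (Finset.univ.filter fun i : Fin (N + 1) => m < 0 ∧ ((i : ℕ) = m.natAbs ∨ (i : ℕ) = n))
        = {⟨n, by omega⟩} := by
      ext i
      simp only [Finset.mem_filter, Finset.mem_univ, true_and, Finset.mem_singleton, Fin.ext_iff]
      omega
    rw [this]
    simp
  · by_cases h : m < 0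
    · have : (Finset.univ.filter
          fun i : Fin (N + 1) => m < 0 ∧ ((i : ℕ) = m.natAbs ∨ (i : ℕ) = n))
          = {⟨m.natAbs, by omega⟩, ⟨n, by omega⟩} := by
        ext i
        simp only [Finset.mem_filter, Finset.mem_univ, true_and, Finset.mem_singleton, Fin.ext_iff,
          Finset.mem_insert]
        omega
      rw [this, Finset.card_pair]
      · simp
      · intro h
        rw [Fin.mk.injEq] at h
        omega
    · rw [Finset.filter_false_of_mem]
      · simp
      · intro i _
        omega

theorem hasVals_mul {N : ℕ} {χ χ' : Bs N →* ℤˣ} {a b a' b' : ℤ} (h : HasVals χ a b)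
    (h' : HasVals χ' a' b') : HasVals (χ * χ') (a * a') (b * b') := by
  intro t m n ht hm hn hm' hn'
  rw [MonoidHom.mul_apply, Units.val_mul, Int.cast_mul, h t m n ht hm hn hm' hn',
    h' t m n ht hm hn hm' hn']
  unfold ww
  split_ifs <;> push_cast <;> ring

theorem ww_mul (a b qp qm : ℂ) (m n : ℤ) :
    ww a b m n * ww qp qm m n = ww (a * qp) (b * qm) m n := by
  unfold ww
  split_ifs <;> simp

theorem sum_chi (qp qm : ℂ) (a b : ℤ) : ∀ (N : ℕ) (χ : Bs N →* ℤˣ), HasVals χ a b →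
    ∑ g : Bs N, (((χ g : ℤˣ) : ℤ) : ℂ) * phi qp qm g =
      ∏ j ∈ Finset.range N, (1 + b * qm + 2 * j * (a * qp)) := by
  intro N
  induction N with
  | zero =>
    intro χ _
    have : ∀ g : Bs 0, g = 1 := fun g => Subtype.ext (Bs_zero g.2)
    have h2 : (Finset.univ : Finset (Bs 0)) = {1} := by
      ext g
      simp [this g]
    rw [h2]
    simp [phi_one]
  | succ N ih =>
    intro χ hχ
    have hle : Bs N ≤ Bs (N + 1) := Bs_mono (by omega)
    set χ' : Bs N →* ℤˣ := χ.comp (Subgroup.inclusion hle) with hχ'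
    have hv : HasVals χ' a b := by
      intro t m n ht hm hn hm' hn'
      exact hχ (Subgroup.inclusion hle t) m n ht hm hn (by omega) (by omega)
    classical
    obtain ⟨F, hF⟩ : ∃ F : Perm ℤ → ℂ, ∀ (g : Perm ℤ) (h : g ∈ Bs (N + 1)),
        F g = (((χ ⟨g, h⟩ : ℤˣ) : ℤ) : ℂ) * phi qp qm g :=
      ⟨fun g : Perm ℤ => if h : g ∈ Bs (N + 1) then
          (((χ ⟨g, h⟩ : ℤˣ) : ℤ) : ℂ) * phi qp qm g else 0, fun g h => dif_pos h⟩
    have e1 : ∑ g : Bs (N + 1), (((χ g : ℤˣ) : ℤ) : ℂ) * phi qp qm g =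
        ∑ g : Bs (N + 1), F g :=
      Finset.sum_congr rfl fun g _ => (hF g.1 g.2).symm
    rw [e1, sum_Bs_succ, Finset.prod_range_succ, ← ih χ' hv,
      ← sum_ww, mul_comm, Finset.sum_mul_sum]
    refine Finset.sum_congr rfl fun m hm => Finset.sum_congr rfl fun g _ => ?_
    have hmem := tt_mul_mem hm g.2
    rw [hF _ hmem]
    rw [mem_mset] at hm
    have htm : tt m ((N + 1 : ℕ) : ℤ) ∈ Bs (N + 1) :=
      tt_mem_Bs hm.1 (by omega) hm.2 (by omega)
    have h3 : (⟨tt m ((N + 1 : ℕ) : ℤ) * g.1, hmem⟩ : Bs (N + 1)) =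
        ⟨_, htm⟩ * Subgroup.inclusion hle g := rfl
    rw [h3, map_mul, phi_tt qp qm (Bs_sub g.2) hm.1 (by omega) (Bs_fixN g.2), Units.val_mul,
      Int.cast_mul, hχ ⟨_, htm⟩ m (N + 1) rfl hm.1 (by omega) hm.2 le_rfl, ← ww_mul]
    have h4 : χ' g = χ (Subgroup.inclusion hle g) := rfl
    rw [h4]
    ring

theorem posdef_sum {f : Perm ℤ → ℂ} (hf : IsPosDefOn BInfSet f) {N : ℕ} (z : Bs N → ℂ) :
    0 ≤ ∑ g : Bs N, ∑ h : Bs N, z g * (starRingEnd ℂ) (z h) * f ((h.1)⁻¹ * g.1) := by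
  let e := Fintype.equivFin (Bs N)
  have := hf (Fintype.card (Bs N)) (fun i => (e.symm i).1) (fun i => Bs_sub (e.symm i).2)
    (fun i => z (e.symm i))
  convert this using 1
  rw [← Equiv.sum_comp e.symm]
  refine Finset.sum_congr rfl fun i _ => ?_
  rw [← Equiv.sum_comp e.symm]

theorem chi_sum_nonneg {f : Perm ℤ → ℂ} (hf : IsPosDefOn BInfSet f) {N : ℕ} (χ : Bs N →* ℤˣ) :
    0 ≤ ∑ g : Bs N, (((χ g : ℤˣ) : ℤ) : ℂ) * f g := by
  have h := posdef_sum hf (fun g => (((χ g : ℤˣ) : ℤ) : ℂ))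
  have h2 : ∑ g : Bs N, ∑ h : Bs N, (((χ g : ℤˣ) : ℤ) : ℂ) *
      (starRingEnd ℂ) (((χ h : ℤˣ) : ℤ) : ℂ) * f ((h.1)⁻¹ * g.1) =
      (Fintype.card (Bs N) : ℂ) * ∑ g : Bs N, (((χ g : ℤˣ) : ℤ) : ℂ) * f g := by
    rw [Finset.sum_comm]
    have : ∀ h : Bs N, ∑ g : Bs N, (((χ g : ℤˣ) : ℤ) : ℂ) *
      (starRingEnd ℂ) (((χ h : ℤˣ) : ℤ) : ℂ) * f ((h.1)⁻¹ * g.1) =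
        ∑ g : Bs N, (((χ g : ℤˣ) : ℤ) : ℂ) * f g := by
      intro h
      rw [← Equiv.sum_comp (Equiv.mulLeft h)]
      refine Finset.sum_congr rfl fun g _ => ?_
      have e1 : (h.1)⁻¹ * (Equiv.mulLeft h g).1 = g.1 := by simp
      have e2 : (χ (Equiv.mulLeft h g)) = χ h * χ g := by simp
      rw [e1, e2]
      rcases Int.units_eq_one_or (χ h) with h1 | h1 <;> rw [h1] <;> simp
    rw [Finset.sum_congr rfl fun h _ => this h]
    simp
  rw [h2] at h
  have h0 : (Fintype.card (Bs N) : ℂ) ≠ 0 := by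
    exact_mod_cast (Fintype.card_pos : 0 < Fintype.card (Bs N)).ne'
  have hc : (0 : ℂ) ≤ (((Fintype.card (Bs N) : ℝ)⁻¹ : ℝ) : ℂ) := by
    have : (0 : ℝ) ≤ (Fintype.card (Bs N) : ℝ)⁻¹ := by positivity
    exact_mod_cast this
  have h3 := mul_nonneg hc h
  push_cast at h3
  rwa [inv_mul_cancel_left₀ h0] at h3

theorem prod_nonneg_of_posdef {qp qm : ℂ} (h : IsPosDefOn BInfSet (phi qp qm)) (a b : ℤ)
    (ha : a = 1 ∨ a = -1) (hb : b = 1 ∨ b = -1) (N : ℕ) :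
    0 ≤ ∏ j ∈ Finset.range N, (1 + b * qm + 2 * j * (a * qp)) := by
  have : ∃ χ : Bs N →* ℤˣ, HasVals χ a b := by
    rcases ha with rfl | rfl <;> rcases hb with rfl | rfl
    · exact ⟨_, hasVals_one N⟩
    · exact ⟨_, hasVals_B N⟩
    · exact ⟨_, hasVals_A N⟩
    · exact ⟨_, hasVals_mul (hasVals_A N) (hasVals_B N)⟩
  obtain ⟨χ, hχ⟩ := this
  rw [← sum_chi qp qm a b N χ hχ]
  exact chi_sum_nonneg h χ

theorem nat_of_prod {x y : ℝ} (hy : 0 < y) (hx : 0 ≤ x)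
    (h : ∀ N : ℕ, 0 ≤ ∏ j ∈ Finset.range N, (x - j * y)) : ∃ M : ℕ, x = M * y := by
  by_contra hc
  push Not at hc
  set M := ⌊x / y⌋₊ with hM
  have h1 : (M : ℝ) * y ≤ x := by
    rw [← le_div_iff₀ hy]
    exact Nat.floor_le (by positivity)
  have h2 : x < ((M : ℝ) + 1) * y := by
    rw [← div_lt_iff₀ hy]
    exact Nat.lt_floor_add_one _
  have h3 := h (M + 2)
  rw [Finset.prod_range_succ] at h3
  have h4 : 0 < ∏ j ∈ Finset.range (M + 1), (x - j * y) := by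
    refine Finset.prod_pos fun j hj => ?_
    rw [Finset.mem_range] at hj
    have h5 : (j : ℝ) ≤ M := by exact_mod_cast Nat.lt_succ_iff.1 hj
    have h6 : (j : ℝ) * y ≤ M * y := by gcongr
    have h7 : x ≠ j * y := hc j
    have : (j : ℝ) * y ≠ x := fun h => h7 h.symm
    have := lt_of_le_of_ne (h6.trans h1) this
    linarith
  have h5 : x - ((M + 1 : ℕ) : ℝ) * y < 0 := by
    push_cast
    linarith
  have := mul_neg_of_pos_of_neg h4 h5
  linarith

theorem forward {qp qm : ℂ} (h : IsPosDefOn BInfSet (phi qp qm)) :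
      ((∃ (M N : ℕ) (ε : ℤ), (ε = 1 ∨ ε = -1) ∧ M + N ≠ 0 ∧
          qp = (ε : ℂ) / ((M : ℂ) + (N : ℂ)) ∧
          qm = ((M : ℂ) - (N : ℂ)) / ((M : ℂ) + (N : ℂ))) ∨
        (qp = 0 ∧ ∃ r : ℝ, qm = (r : ℂ) ∧ -1 ≤ r ∧ r ≤ 1)) := by
  have P := prod_nonneg_of_posdef h
  have p1 : (0 : ℂ) ≤ 1 + qm := by simpa using P 1 1 (Or.inl rfl) (Or.inl rfl) 1
  have p2 : (0 : ℂ) ≤ 1 + -qm := by simpa using P 1 (-1) (Or.inl rfl) (Or.inr rfl) 1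
  obtain ⟨r, rfl⟩ : ∃ r : ℝ, qm = r := by
    rw [Complex.le_def] at p1
    refine ⟨qm.re, Complex.ext rfl ?_⟩
    simpa using p1.2.symm
  have r1 : -1 ≤ r := by
    have : (0 : ℝ) ≤ 1 + r := by exact_mod_cast p1
    linarith
  have r2 : r ≤ 1 := by
    have : (0 : ℝ) ≤ 1 + -r := by exact_mod_cast p2
    linarith
  obtain ⟨q, rfl⟩ : ∃ q : ℝ, qp = q := by
    refine ⟨qp.re, Complex.ext rfl ?_⟩
    rw [Complex.ofReal_im]
    by_cases hr : r = -1
    · have := P 1 (-1) (Or.inl rfl) (Or.inr rfl) 2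
      subst hr
      simp only [Finset.prod_range_succ, Finset.prod_range_zero] at this
      have := (Complex.le_def.1 this).2
      simp at this
      linarith
    · have := P 1 1 (Or.inl rfl) (Or.inl rfl) 2
      simp only [Finset.prod_range_succ, Finset.prod_range_zero] at this
      have := (Complex.le_def.1 this).2
      simp at this
      rcases this with h | h
      · exfalso
        apply hr
        linarith
      · exact h
  by_cases hq : q = 0
  · right
    exact ⟨by rw [hq]; simp, r, rfl, r1, r2⟩
  left
  have main : ∃ a : ℤ, (a = 1 ∨ a = -1) ∧ 0 < (a : ℝ) * q := by
    rcases lt_or_gt_of_ne hq with h | h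
    · exact ⟨-1, Or.inr rfl, by push_cast; linarith⟩
    · exact ⟨1, Or.inl rfl, by push_cast; linarith⟩
  obtain ⟨a, ha, haq⟩ := main
  have hna : -a = 1 ∨ -a = -1 := by omega
  have Q : ∀ b : ℤ, (b = 1 ∨ b = -1) → ∃ M : ℕ, 1 + b * r = M * (2 * (a * q)) := by
    intro b hb
    apply nat_of_prod (by linarith)
    · rcases hb with rfl | rfl
      · push_cast; linarith
      · push_cast; linarith
    · intro N
      have := P (-a) b hna hb N
      have e : (∏ j ∈ Finset.range N, (1 + (b : ℂ) * r + 2 * j * (((-a : ℤ) : ℂ) * q))) =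
          ((∏ j ∈ Finset.range N, (1 + b * r - j * (2 * (a * q))) : ℝ) : ℂ) := by
        push_cast
        refine Finset.prod_congr rfl fun j _ => ?_
        ring
      rw [e] at this
      exact_mod_cast this
  obtain ⟨M, hM⟩ := Q 1 (Or.inl rfl)
  obtain ⟨N, hN⟩ := Q (-1) (Or.inr rfl)
  push_cast at hM hN
  have hs : ((M : ℝ) + N) * (a * q) = 1 := by linarith
  have hpos : (M : ℝ) + N ≠ 0 := by
    intro h
    rw [h] at hs
    simp at hs
  have haa : (a : ℝ) * a = 1 := by
    rcases ha with rfl | rfl <;> simp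
  refine ⟨M, N, a, ha, ?_, ?_, ?_⟩
  · intro h
    apply hpos
    exact_mod_cast h
  · have : q = a / ((M : ℝ) + N) := by
      rw [eq_div_iff hpos]
      linear_combination (a : ℝ) * hs - q * (M + N) * haa
    rw [this]
    push_cast
    rfl
  · have : r = ((M : ℝ) - N) / ((M : ℝ) + N) := by
      rw [eq_div_iff hpos]
      linear_combination ((M : ℝ) + N) / 2 * hM - ((M : ℝ) + N) / 2 * hN + (M - N) * hs
    rw [this]
    push_cast
    rfl

/-- Sign picked up by a color. -/
def sp {C : Type*} (s : C → ℤˣ) (x : C) (e : ℤˣ) : ℤˣ := if e = 1 then 1 else s x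

theorem sp_one {C : Type*} (s : C → ℤˣ) (x : C) : sp s x 1 = 1 := if_pos rfl

theorem sp_neg_one {C : Type*} (s : C → ℤˣ) (x : C) : sp s x (-1) = s x := if_neg (by decide)

theorem sp_mul {C : Type*} (s : C → ℤˣ) (x : C) (e e' : ℤˣ) :
    sp s x (e * e') = sp s x e * sp s x e' := by
  rcases Int.units_eq_one_or e with rfl | rfl <;> rcases Int.units_eq_one_or e' with rfl | rfl <;>
    simp [sp_one, sp_neg_one]

def uu {C : Type*} (s : C → ℤˣ) {N : ℕ} (g : Bs N) (c : Fin (N + 1) → C) : ℤˣ :=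
  ∏ i, sp s (c (ab g i)) (eps g i)

theorem uu_mul {C : Type*} (s : C → ℤˣ) {N : ℕ} (g h : Bs N) (c : Fin (N + 1) → C) :
    uu s (g * h) c = uu s g c * uu s h (c ∘ ab g) := by
  unfold uu
  rw [← Equiv.prod_comp (ab h) (fun i => sp s (c (ab g i)) (eps g i)), ← Finset.prod_mul_distrib]
  refine Finset.prod_congr rfl fun i _ => ?_
  rw [eps_mul, sp_mul, ab_mul]
  rfl

def TT {C : Type*} [Fintype C] [DecidableEq C] (s : C → ℤˣ) {N : ℕ} (θ : Bs N →* ℤˣ)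
    (g : Bs N) : ℂ :=
  ∑ c : Fin (N + 1) → C, if c ∘ ab g = c then (((θ g * uu s g c : ℤˣ) : ℤ) : ℂ) else 0

theorem TT_inv_mul {C : Type*} [Fintype C] [DecidableEq C] (s : C → ℤˣ) {N : ℕ}
    (θ : Bs N →* ℤˣ) (g h : Bs N) :
    TT s θ (h⁻¹ * g) = ∑ c : Fin (N + 1) → C, if c ∘ ab g = c ∘ ab h then
      (((θ g * uu s g c : ℤˣ) : ℤ) : ℂ) * (((θ h * uu s h c : ℤˣ) : ℤ) : ℂ) else 0 := by
  obtain ⟨k, rfl⟩ : ∃ k, g = h * k := ⟨h⁻¹ * g, by group⟩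
  rw [inv_mul_cancel_left, TT, ← Equiv.sum_comp ((ab h).symm.arrowCongr (Equiv.refl C))]
  refine Finset.sum_congr rfl fun c _ => ?_
  have e : ((ab h).symm.arrowCongr (Equiv.refl C)) c = c ∘ ab h := by
    ext i
    simp
  rw [e, ab_mul]
  have e2 : (c ∘ ab h) ∘ ab k = c ∘ (ab h * ab k : Perm _) := rfl
  rw [e2]
  split_ifs with hc
  · rw [← Int.cast_mul, ← Units.val_mul, map_mul, uu_mul]
    congr 2
    have h1 := Int.units_mul_self (θ h)
    have h2 := Int.units_mul_self (uu s h c)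
    calc θ k * uu s k (c ∘ ab h) = (θ h * θ h) * (uu s h c * uu s h c) *
          (θ k * uu s k (c ∘ ab h)) := by rw [h1, h2]; simp
      _ = _ := by ac_rfl
  · rfl

theorem TT_posdef {C : Type*} [Fintype C] [DecidableEq C] (s : C → ℤˣ) {N : ℕ}
    (θ : Bs N →* ℤˣ) (k : ℕ) (g : Fin k → Bs N) (z : Fin k → ℂ) :
    0 ≤ ∑ i : Fin k, ∑ j : Fin k, z i * (starRingEnd ℂ) (z j) * TT s θ ((g j)⁻¹ * g i) := by
  set A : (Fin (N + 1) → C) → (Fin (N + 1) → C) → Fin k → ℂ := fun c v i =>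
    if c ∘ ab (g i) = v then z i * (((θ (g i) * uu s (g i) c : ℤˣ) : ℤ) : ℂ) else 0 with hA
  have key : ∑ i : Fin k, ∑ j : Fin k, z i * (starRingEnd ℂ) (z j) * TT s θ ((g j)⁻¹ * g i) =
      ∑ c, ∑ v, (∑ i, A c v i) * (starRingEnd ℂ) (∑ i, A c v i) := by
    have h1 : ∀ i j, z i * (starRingEnd ℂ) (z j) * TT s θ ((g j)⁻¹ * g i) =
        ∑ c, ∑ v, A c v i * (starRingEnd ℂ) (A c v j) := by
      intro i j
      rw [TT_inv_mul, Finset.mul_sum]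
      refine Finset.sum_congr rfl fun c _ => ?_
      rw [Finset.sum_eq_single (c ∘ ab (g i))]
      · simp only [hA, if_true]
        by_cases h : c ∘ ab (g i) = c ∘ ab (g j)
        · rw [if_pos h, if_pos h.symm, map_mul, map_intCast]
          ring
        · rw [if_neg h, if_neg (Ne.symm h)]
          simp
      · intro v _ hv
        simp only [hA]
        rw [if_neg (Ne.symm hv)]
        simp
      · simp
    simp only [h1, map_sum, Finset.sum_mul_sum]
    rw [Finset.sum_congr rfl fun i _ => Finset.sum_comm, Finset.sum_comm]
    refine Finset.sum_congr rfl fun c _ => ?_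
    rw [Finset.sum_congr rfl fun i _ => Finset.sum_comm, Finset.sum_comm]
  rw [key]
  refine Finset.sum_nonneg fun c _ => Finset.sum_nonneg fun v _ => ?_
  rw [Complex.mul_conj]
  have := Complex.normSq_nonneg (∑ i, A c v i)
  exact_mod_cast this

theorem sum_update {I C : Type*} [Fintype I] [DecidableEq I] [Fintype C] [DecidableEq C] (n : I)
    (G : (I → C) → ℂ) :
    ∑ c : I → C, ∑ x : C, G (Function.update c n x) = (Fintype.card C : ℂ) * ∑ c, G c := by
  have : ∑ p : (I → C) × C, G (Function.update p.1 n p.2) = ∑ p : (I → C) × C, G p.1 := by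
    refine Finset.sum_bij' (fun p _ => (Function.update p.1 n p.2, p.1 n))
      (fun p _ => (Function.update p.1 n p.2, p.1 n)) ?_ ?_ ?_ ?_ ?_ <;> simp
  rw [Fintype.sum_prod_type, Fintype.sum_prod_type] at this
  rw [this]
  simp [Finset.mul_sum]

theorem TT_tt {C : Type*} [Fintype C] [DecidableEq C] [Nonempty C] (s : C → ℤˣ) {N : ℕ}
    (θ : Bs N →* ℤˣ) (η : ℤ) (hθ : HasVals θ η 1) (f t : Bs N) (m : ℤ) (n : ℕ)
    (ht : t.1 = tt m n) (hm : m ≠ 0) (hn : n ≠ 0) (hm' : m.natAbs ≤ N) (hn' : n ≤ N)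
    (hf : f.1 n = n) :
    TT s θ (t * f) = ww (η / (Fintype.card C : ℂ))
      ((∑ x, (((s x : ℤˣ) : ℤ) : ℂ)) / (Fintype.card C : ℂ)) m n * TT s θ f := by
  have hd : (Fintype.card C : ℂ) ≠ 0 := by
    exact_mod_cast Fintype.card_ne_zero
  have hθt := hθ t m n ht hm hn hm' hn'
  set ν : Fin (N + 1) := ⟨n, by omega⟩ with hν
  set μ : Fin (N + 1) := ⟨m.natAbs, by omega⟩ with hμ
  have habt : ab t = swap μ ν := ab_tt t ht hm hn _ _
  have habf : ab f ν = ν := by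
    apply Fin.ext
    rw [ab_val]
    simp [hν, hf]
  have hepsf : eps f ν = 1 := by
    unfold eps
    rw [if_neg]
    simp [hν, hf]
  have habf' : ∀ i, i ≠ ν → ab f i ≠ ν := by
    intro i hi h
    exact hi ((ab f).injective (h.trans habf.symm))
  set F : (Fin (N + 1) → C) → ℂ := fun c =>
    if c ∘ ab f = c then (((θ f * uu s f c : ℤˣ) : ℤ) : ℂ) else 0 with hF
  have hTf : TT s θ f = ∑ c, F c := rfl
  have hFu : ∀ c x, F (Function.update c ν x) = F c := by
    intro c x
    have e1 : (Function.update c ν x) ∘ ab f = Function.update c ν x ↔ c ∘ ab f = c := by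
      rw [funext_iff, funext_iff]
      refine forall_congr' fun i => ?_
      by_cases hi : i = ν
      · rw [hi]
        simp [habf]
      · simp [hi, habf' i hi]
    have e2 : uu s f (Function.update c ν x) = uu s f c := by
      unfold uu
      refine Finset.prod_congr rfl fun i _ => ?_
      by_cases hi : i = ν
      · rw [hi, hepsf, sp_one, sp_one]
      · rw [Function.update_of_ne (habf' i hi)]
    simp only [hF, e1, e2]
  unfold ww at hθt ⊢
  split_ifs at hθt ⊢ with h1 h2
  · have : t = 1 := by
      apply Subtype.ext
      rw [ht, h1, tt_self (by omega)]
      rfl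
    rw [this]
    simp
  · have hμν : μ = ν := by
      apply Fin.ext
      simp only [hμ, hν]
      omega
    have hab1 : ab t = 1 := by
      rw [habt, hμν, swap_self]
      rfl
    have hut : ∀ c, uu s t c = s (c ν) := by
      intro c
      unfold uu
      rw [Finset.prod_eq_single ν]
      · rw [hab1, eps_tt t ht hm hn, if_pos, sp_neg_one]
        · rfl
        · simp only [hν]
          omega
      · intro i _ hi
        rw [eps_tt t ht hm hn, if_neg, sp_one]
        have : (i : ℕ) ≠ n := fun h => hi (Fin.ext h)
        omega
      · simp
    have hG : TT s θ (t * f) = ∑ c, (((s (c ν) : ℤˣ) : ℤ) : ℂ) * F c := by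
      refine Finset.sum_congr rfl fun c _ => ?_
      simp only [hF]
      rw [ab_mul, hab1, one_mul]
      split_ifs
      · rw [map_mul, uu_mul, hut, hab1]
        have e : c ∘ (1 : Perm (Fin (N + 1))) = c := rfl
        rw [e]
        push_cast
        rw [hθt]
        push_cast
        ring
      · simp
    have hU := sum_update ν (fun c => (((s (c ν) : ℤˣ) : ℤ) : ℂ) * F c)
    simp only [Function.update_self, hFu, ← Finset.sum_mul] at hU
    rw [← Finset.mul_sum] at hU
    rw [hG, hTf, div_mul_eq_mul_div, eq_div_iff hd, mul_comm, ← hU]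
  · have hμν : μ ≠ ν := by
      intro h
      have := congrArg Fin.val h
      simp only [hμ, hν] at this
      omega
    have hct : ∀ c : Fin (N + 1) → C, c μ = c ν → c ∘ ab t = c := by
      intro c hc
      ext i
      rw [Function.comp_apply, habt, swap_apply_def]
      split_ifs with h h'
      · rw [h, hc]
      · rw [h', hc]
      · rfl
    have hut : ∀ c : Fin (N + 1) → C, c μ = c ν → uu s t c = 1 := by
      intro c hc
      unfold uu
      rw [← Finset.mul_prod_erase _ _ (Finset.mem_univ μ),
        ← Finset.mul_prod_erase _ _ (show ν ∈ Finset.univ.erase μ by simp [hμν.symm]),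
        Finset.prod_eq_one]
      · have e1 : eps t μ = eps t ν := by
          rw [eps_tt t ht hm hn, eps_tt t ht hm hn]
          simp [hμ, hν]
        rw [e1, habt, swap_apply_left, swap_apply_right, hc, mul_one, Int.units_mul_self]
      · intro i hi
        rw [Finset.mem_erase, Finset.mem_erase] at hi
        rw [eps_tt t ht hm hn, if_neg, sp_one]
        have e1 : (i : ℕ) ≠ n := fun h => hi.1 (Fin.ext h)
        have e2 : (i : ℕ) ≠ m.natAbs := fun h => hi.2.1 (Fin.ext h)
        omega
    have hG : TT s θ (t * f) = ∑ c, (if c μ = c ν then (η : ℂ) else 0) * F c := by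
      refine Finset.sum_congr rfl fun c _ => ?_
      simp only [hF]
      rw [ab_mul]
      have e0 : c ∘ (ab t * ab f : Perm (Fin (N + 1))) = (c ∘ ab t) ∘ ab f := rfl
      rw [e0]
      by_cases hc : c μ = c ν
      · rw [hct c hc, if_pos hc]
        split_ifs
        · rw [map_mul, uu_mul, hut c hc, hct c hc]
          push_cast
          rw [hθt]
          ring
        · simp
      · rw [if_neg hc, if_neg]
        · simp
        · intro h
          apply hc
          have := congrFun h ν
          rw [Function.comp_apply, habf, Function.comp_apply, habt, swap_apply_right] at this
          exact this
    have hU := sum_update ν (fun c => (if c μ = c ν then (η : ℂ) else 0) * F c)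
    simp only [Function.update_self, hFu, Function.update_of_ne hμν, ← Finset.sum_mul,
      Finset.sum_ite_eq, Finset.mem_univ, if_true] at hU
    rw [← Finset.mul_sum] at hU
    rw [hG, hTf, div_mul_eq_mul_div, eq_div_iff hd, mul_comm, ← hU]

theorem TT_eq {C : Type*} [Fintype C] [DecidableEq C] [Nonempty C] (s : C → ℤˣ) {N : ℕ}
    (θ : Bs N →* ℤˣ) (η : ℤ) (hθ : HasVals θ η 1) (n : ℕ) (hn : n ≤ N) (g : Bs N)
    (hg : g.1 ∈ Bs n) :
    TT s θ g = phi (η / (Fintype.card C : ℂ))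
      ((∑ x, (((s x : ℤˣ) : ℤ) : ℂ)) / (Fintype.card C : ℂ)) g.1 * TT s θ 1 := by
  induction n generalizing g with
  | zero =>
    have : g = 1 := Subtype.ext (Bs_zero hg)
    subst this
    simp [phi_one]
  | succ n ih =>
    obtain ⟨h1, h2⟩ := Bs_decomp hg
    have h3 := mem_mset.1 h1
    set m := g.1 ((n + 1 : ℕ) : ℤ) with hm
    have ht : tt m ((n + 1 : ℕ) : ℤ) ∈ Bs N := tt_mem_Bs h3.1 (by omega) (by omega) (by omega)
    set t : Bs N := ⟨_, ht⟩ with htdef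
    have h4 := ih (by omega) (t⁻¹ * g) h2
    have h5 : g = t * (t⁻¹ * g) := by group
    have h6 : g.1 = tt m ((n + 1 : ℕ) : ℤ) * (t⁻¹ * g).1 := congrArg Subtype.val h5
    have h7 : (t⁻¹ * g).1 ((n + 1 : ℕ) : ℤ) = (n + 1 : ℕ) := Bs_fixN h2
    rw [h6, phi_tt _ _ (f := (t⁻¹ * g).1) (Bs_sub h2) h3.1 (by omega) h7, mul_assoc, ← h4]
    conv_lhs => rw [h5]
    exact TT_tt s θ η hθ (t⁻¹ * g) t m (n + 1) rfl h3.1 (by omega) (by omega) hn h7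

theorem TT_one {C : Type*} [Fintype C] [DecidableEq C] (s : C → ℤˣ) {N : ℕ}
    (θ : Bs N →* ℤˣ) : TT s θ 1 = (Fintype.card C : ℂ) ^ (N + 1) := by
  have : ∀ c : Fin (N + 1) → C, uu s (1 : Bs N) c = 1 := by
    intro c
    simp [uu, eps_one, sp_one]
  simp [TT, ab_one, this]

theorem backward_a (M N : ℕ) (ε : ℤ) (hε : ε = 1 ∨ ε = -1) (hMN : M + N ≠ 0) :
    IsPosDefOn BInfSet (phi ((ε : ℂ) / ((M : ℂ) + (N : ℂ)))
      (((M : ℂ) - (N : ℂ)) / ((M : ℂ) + (N : ℂ)))) := by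
  intro k g hg z
  choose K hK using fun i => exists_Bs (hg i)
  set L := Finset.univ.sup K with hL
  have hgL : ∀ i, g i ∈ Bs L := fun i => Bs_mono (Finset.le_sup (Finset.mem_univ i)) (hK i)
  let s : Fin M ⊕ Fin N → ℤˣ := Sum.elim (fun _ => 1) (fun _ => -1)
  have hne : Nonempty (Fin M ⊕ Fin N) := by
    rw [← Fintype.card_pos_iff]
    simp
    omega
  have hcard : (Fintype.card (Fin M ⊕ Fin N) : ℂ) = (M : ℂ) + N := by simp
  have hsum : ∑ x, (((s x : ℤˣ) : ℤ) : ℂ) = (M : ℂ) - N := by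
    simp [s, sub_eq_add_neg]
  obtain ⟨θ, hθ⟩ : ∃ θ : Bs L →* ℤˣ, HasVals θ ε 1 := by
    rcases hε with rfl | rfl
    · exact ⟨_, hasVals_one L⟩
    · exact ⟨_, hasVals_A L⟩
  have h1 := TT_posdef s θ k (fun i => ⟨g i, hgL i⟩) z
  have h2 : ∀ x : Bs L, TT s θ x = phi ((ε : ℂ) / ((M : ℂ) + (N : ℂ)))
      (((M : ℂ) - (N : ℂ)) / ((M : ℂ) + (N : ℂ))) x.1 * ((M : ℂ) + N) ^ (L + 1) := by
    intro x
    rw [TT_eq s θ ε hθ L le_rfl x x.2, TT_one, hcard, hsum]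
  simp only [h2, ← mul_assoc, ← Finset.sum_mul] at h1
  have h0 : ((M : ℂ) + N) ^ (L + 1) ≠ 0 := by
    apply pow_ne_zero
    exact_mod_cast hMN
  have hc : (0 : ℂ) ≤ (((((M : ℝ) + N) ^ (L + 1))⁻¹ : ℝ) : ℂ) := by
    have : (0 : ℝ) ≤ (((M : ℝ) + N) ^ (L + 1))⁻¹ := by positivity
    exact_mod_cast this
  have h3 := mul_nonneg h1 hc
  push_cast at h3
  rw [mul_inv_cancel_right₀ h0] at h3
  exact h3

theorem backward_b (r : ℝ) (h1 : -1 ≤ r) (h2 : r ≤ 1) : IsPosDefOn BInfSet (phi 0 r) := by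
  intro k g hg z
  let M : ℕ → ℕ := fun d => ⌊(1 + r) / 2 * (d : ℝ)⌋₊
  have hM : ∀ d, M d ≤ d := by
    intro d
    apply Nat.floor_le_of_le
    have : (0 : ℝ) ≤ d := Nat.cast_nonneg d
    nlinarith
  have hlim : Filter.Tendsto (fun d : ℕ => (M d : ℝ) / d) Filter.atTop (nhds ((1 + r) / 2)) :=
    (tendsto_nat_floor_mul_div_atTop (by linarith : (0 : ℝ) ≤ (1 + r) / 2)).comp
      tendsto_natCast_atTop_atTop
  have hq : Filter.Tendsto (fun d : ℕ => (((1 / (d : ℝ) : ℝ)) : ℂ)) Filter.atTop (nhds 0) := by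
    have := (Complex.continuous_ofReal.tendsto 0).comp tendsto_one_div_atTop_nhds_zero_nat
    rw [Complex.ofReal_zero] at this
    exact this
  have hr : Filter.Tendsto (fun d : ℕ => ((2 * ((M d : ℝ) / d) - 1 : ℝ) : ℂ)) Filter.atTop
      (nhds (r : ℂ)) := by
    refine (Complex.continuous_ofReal.tendsto r).comp ?_
    have := (hlim.const_mul 2).sub_const 1
    convert this using 2
    ring
  have hphi : ∀ x, Filter.Tendsto (fun d : ℕ => phi (((1 / (d : ℝ) : ℝ)) : ℂ)
      ((2 * ((M d : ℝ) / d) - 1 : ℝ) : ℂ) x) Filter.atTop (nhds (phi 0 r x)) := by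
    intro x
    exact (hq.pow _).mul (hr.pow _)
  have hS := tendsto_finsetSum (Finset.univ : Finset (Fin k)) fun i _ =>
    tendsto_finsetSum (Finset.univ : Finset (Fin k)) fun j _ =>
      (hphi ((g j)⁻¹ * g i)).const_mul (z i * (starRingEnd ℂ) (z j))
  refine ge_of_tendsto hS ?_
  filter_upwards [Filter.eventually_ge_atTop 1] with d hd
  have hd0 : (d : ℂ) ≠ 0 := by
    exact_mod_cast (by omega : d ≠ 0)
  have h3 := backward_a (M d) (d - M d) 1 (Or.inl rfl) (by have := hM d; omega) k g hg z
  have e1 : (M d : ℂ) + ((d - M d : ℕ) : ℂ) = d := by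
    rw [Nat.cast_sub (hM d)]
    ring
  have e2 : (M d : ℂ) - ((d - M d : ℕ) : ℂ) = 2 * M d - d := by
    rw [Nat.cast_sub (hM d)]
    ring
  have e3 : ((2 * ((M d : ℝ) / d) - 1 : ℝ) : ℂ) = (2 * M d - d) / d := by
    push_cast
    field_simp
  have e4 : (((1 / (d : ℝ) : ℝ)) : ℂ) = ((1 : ℤ) : ℂ) / d := by
    push_cast
    rfl
  rw [e1, e2] at h3
  rw [e3, e4]
  exact h3

/-- classification of the parameters for which the signed reflection
function is positive definite on B(∞). -/
theorem signed_reflection_posdef_iff (qp qm : ℂ) :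
    IsPosDefOn BInfSet (phi qp qm) ↔
      ((∃ (M N : ℕ) (ε : ℤ), (ε = 1 ∨ ε = -1) ∧ M + N ≠ 0 ∧
          qp = (ε : ℂ) / ((M : ℂ) + (N : ℂ)) ∧
          qm = ((M : ℂ) - (N : ℂ)) / ((M : ℂ) + (N : ℂ))) ∨
        (qp = 0 ∧ ∃ r : ℝ, qm = (r : ℂ) ∧ -1 ≤ r ∧ r ≤ 1)) := by
  constructor
  · exact forward
  · rintro (⟨M, N, ε, hε, hMN, rfl, rfl⟩ | ⟨rfl, r, rfl, h1, h2⟩)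
    · exact backward_a M N ε hε hMN
    · exact backward_b r h1 h2

end TypeB
end
end

section
/- Let q ∈ ℂ. The reflection function σ ↦ q^{ℓ_R(σ)} on the infinite symmetric group S(∞) is positive definite if and only if q = 0 or q⁻¹ ∈ ℤ (i.e. q = 1/k for some nonzero integer k). -/
/-!
STATEMENT 6: on the infinite symmetric group S(∞) of finitary permutations of ℕ, the
reflection function σ ↦ q^{ℓ_R(σ)} (ℓ_R = minimal number of transpositions) is positive
definite iff q = 0 or q = 1/k for some nonzero integer k.
-/

open scoped ComplexOrder

noncomputable section

namespace TypeA

/-- The infinite symmetric group S(∞): finitary permutations of ℕ. -/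
def SInfSet : Set (Equiv.Perm ℕ) := {σ | {i : ℕ | σ i ≠ i}.Finite}

/-- The reflection length: the minimal number of transpositions whose product is σ
(with sInf ∅ = 0 by convention; the set is nonempty for every finitary σ). -/
def reflLen (σ : Equiv.Perm ℕ) : ℕ :=
  sInf {k : ℕ | ∃ r : Fin k → Equiv.Perm ℕ,
    (∀ t, ∃ a b : ℕ, a ≠ b ∧ r t = Equiv.swap a b) ∧ (List.ofFn r).prod = σ}

/-- A function on a group is positive definite on a subset S. -/
def IsPosDefOn {G : Type*} [Group G] (S : Set G) (f : G → ℂ) : Prop :=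
  ∀ (k : ℕ) (g : Fin k → G), (∀ i, g i ∈ S) → ∀ z : Fin k → ℂ,
    0 ≤ ∑ i : Fin k, ∑ j : Fin k, z i * (starRingEnd ℂ) (z j) * f ((g j)⁻¹ * g i)

/-- `σ` is a product of `j` transpositions. -/
def IsProd (j : ℕ) (σ : Equiv.Perm ℕ) : Prop :=
  ∃ r : Fin j → Equiv.Perm ℕ,
    (∀ t, ∃ a b : ℕ, a ≠ b ∧ r t = Equiv.swap a b) ∧ (List.ofFn r).prod = σ

lemma isProd_zero {σ : Equiv.Perm ℕ} : IsProd 0 σ ↔ σ = 1 := by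
  constructor
  · rintro ⟨r, -, h⟩
    simpa using h.symm
  · rintro rfl
    exact ⟨Fin.elim0, fun t => t.elim0, by simp⟩

/-- peel off the first transposition -/
lemma isProd_succ {j : ℕ} {σ : Equiv.Perm ℕ} :
    IsProd (j + 1) σ ↔ ∃ a b : ℕ, a ≠ b ∧ ∃ τ, IsProd j τ ∧ σ = Equiv.swap a b * τ := by
  constructor
  · rintro ⟨r, hr, h⟩
    obtain ⟨a, b, hab, h0⟩ := hr 0
    refine ⟨a, b, hab, _, ⟨fun t => r t.succ, fun t => hr _, rfl⟩, ?_⟩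
    rw [← h, List.ofFn_succ, List.prod_cons, h0]
  · rintro ⟨a, b, hab, τ, ⟨r, hr, h⟩, rfl⟩
    refine ⟨Fin.cons (Equiv.swap a b) r, ?_, ?_⟩
    · intro t
      refine Fin.cases ?_ ?_ t
      · exact ⟨a, b, hab, by simp⟩
      · intro i
        simpa using hr i
    · rw [List.ofFn_succ, List.prod_cons]
      simp [h]

lemma IsProd.mul {i j : ℕ} {σ τ : Equiv.Perm ℕ} (h : IsProd i σ) (h' : IsProd j τ) :
    IsProd (i + j) (σ * τ) := by
  induction i generalizing σ with
  | zero => rw [isProd_zero.1 h]; simpa using h'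
  | succ i ih =>
    obtain ⟨a, b, hab, ρ, hρ, rfl⟩ := isProd_succ.1 h
    rw [Nat.add_right_comm, isProd_succ]
    exact ⟨a, b, hab, ρ * τ, ih hρ, by rw [mul_assoc]⟩

lemma isProd_swap {a b : ℕ} (h : a ≠ b) : IsProd 1 (Equiv.swap a b) :=
  isProd_succ.2 ⟨a, b, h, 1, isProd_zero.2 rfl, by simp⟩

/-- peel off the last transposition -/
lemma IsProd.last {j : ℕ} {σ : Equiv.Perm ℕ} (h : IsProd (j + 1) σ) :
    ∃ a b : ℕ, a ≠ b ∧ ∃ τ, IsProd j τ ∧ σ = τ * Equiv.swap a b := by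
  induction j generalizing σ with
  | zero =>
    obtain ⟨a, b, hab, τ, hτ, rfl⟩ := isProd_succ.1 h
    rw [isProd_zero] at hτ
    exact ⟨a, b, hab, 1, isProd_zero.2 rfl, by simp [hτ]⟩
  | succ j ih =>
    obtain ⟨a, b, hab, τ, hτ, rfl⟩ := isProd_succ.1 h
    obtain ⟨c, d, hcd, ρ, hρ, rfl⟩ := ih hτ
    exact ⟨c, d, hcd, Equiv.swap a b * ρ, isProd_succ.2 ⟨a, b, hab, ρ, hρ, rfl⟩,
      by rw [mul_assoc]⟩

/-- the deletion lemma -/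
lemma IsProd.delete {j : ℕ} {σ : Equiv.Perm ℕ} (h : IsProd j σ) {n : ℕ} (hn : σ n ≠ n) :
    ∃ i, j = i + 1 ∧ IsProd i (Equiv.swap n (σ n) * σ) := by
  induction j generalizing σ with
  | zero => rw [isProd_zero] at h; simp [h] at hn
  | succ j ih =>
    refine ⟨j, rfl, ?_⟩
    obtain ⟨a, b, hab, τ, hτ, rfl⟩ := h.last
    -- the case where the last transposition moves `n`
    have key : ∀ p, p ≠ n → (τ * Equiv.swap n p) n ≠ n →
        IsProd j (Equiv.swap n ((τ * Equiv.swap n p) n) * (τ * Equiv.swap n p)) := by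
      intro p hp hne
      have e1 : (τ * Equiv.swap n p) n = τ p := by simp
      rw [e1] at hne ⊢
      have e2 : τ * Equiv.swap n p = Equiv.swap (τ n) (τ p) * τ :=
        Equiv.mul_swap_eq_swap_mul τ n p
      rw [e2]
      by_cases hu : τ n = n
      · rw [hu, Equiv.swap_mul_self_mul]; exact hτ
      · obtain ⟨i, rfl, hi⟩ := ih hτ hu
        have hum : τ n ≠ τ p := fun h => hp (τ.injective h).symm
        rw [isProd_succ]
        refine ⟨τ n, τ p, hum, _, hi, ?_⟩
        rw [← mul_assoc, ← mul_assoc]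
        congr 1
        generalize τ n = u at *
        generalize τ p = m at *
        ext x
        simp only [Equiv.Perm.mul_apply, Equiv.swap_apply_def]
        split_ifs <;> simp_all
    by_cases h1 : a = n
    · subst h1; exact key b (Ne.symm hab) hn
    by_cases h2 : b = n
    · subst h2
      rw [Equiv.swap_comm a b] at hn ⊢
      exact key a hab hn
    have e1 : (τ * Equiv.swap a b) n = τ n := by
      simp [Equiv.swap_apply_of_ne_of_ne (Ne.symm h1) (Ne.symm h2)]
    rw [e1] at hn ⊢
    obtain ⟨i, rfl, hi⟩ := ih hτ hn
    rw [← mul_assoc]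
    exact hi.mul (isProd_swap hab)

/-- permutations fixing every point `≥ N` -/
def Fixes (N : ℕ) (σ : Equiv.Perm ℕ) : Prop := ∀ i, N ≤ i → σ i = i

lemma Fixes.mono {M N : ℕ} (h : M ≤ N) {σ : Equiv.Perm ℕ} (hσ : Fixes M σ) : Fixes N σ :=
  fun i hi => hσ i (h.trans hi)

lemma Fixes.mul {N : ℕ} {σ τ : Equiv.Perm ℕ} (h : Fixes N σ) (h' : Fixes N τ) :
    Fixes N (σ * τ) := fun i hi => by rw [Equiv.Perm.mul_apply, h' i hi, h i hi]

lemma Fixes.inv {N : ℕ} {σ : Equiv.Perm ℕ} (h : Fixes N σ) : Fixes N σ⁻¹ :=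
  fun i hi => by rw [Equiv.Perm.inv_eq_iff_eq, h i hi]

lemma Fixes.lt {N n : ℕ} {σ : Equiv.Perm ℕ} (h : Fixes N σ) (hn : σ n ≠ n) : n < N := by
  by_contra hc
  exact hn (h n (not_lt.1 hc))

lemma fixes_swap {N a b : ℕ} (ha : a < N) (hb : b < N) : Fixes N (Equiv.swap a b) :=
  fun i hi => Equiv.swap_apply_of_ne_of_ne (by omega) (by omega)

lemma Fixes.apply_lt {N n : ℕ} {σ : Equiv.Perm ℕ} (h : Fixes N σ) (hn : n < N) : σ n < N := by
  by_contra hc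
  have h1 := h (σ n) (not_lt.1 hc)
  have h2 := σ.injective h1
  omega

lemma Fixes.mem {N : ℕ} {σ : Equiv.Perm ℕ} (h : Fixes N σ) : σ ∈ SInfSet :=
  (Set.finite_Iio N).subset fun _ hi => h.lt hi

lemma exists_fixes {σ : Equiv.Perm ℕ} (h : σ ∈ SInfSet) : ∃ N, Fixes N σ := by
  obtain ⟨N, hN⟩ := Set.Finite.bddAbove h
  refine ⟨N + 1, fun i hi => ?_⟩
  by_contra hc
  have := hN hc
  omega

lemma Fixes.zero {σ : Equiv.Perm ℕ} (h : Fixes 0 σ) : σ = 1 := by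
  ext i; simp [h i (Nat.zero_le _)]

lemma Fixes.reduce {N : ℕ} {σ : Equiv.Perm ℕ} (h : Fixes (N + 1) σ) :
    Fixes N (Equiv.swap N (σ N) * σ) := by
  intro i hi
  rcases hi.eq_or_lt with rfl | hi
  · simp
  · exact (fixes_swap (Nat.lt_succ_self N) (h.apply_lt (Nat.lt_succ_self N))).mul h i hi

lemma Fixes.exists_isProd {N : ℕ} {σ : Equiv.Perm ℕ} (h : Fixes N σ) : ∃ j, IsProd j σ := by
  induction N generalizing σ with
  | zero => exact ⟨0, isProd_zero.2 h.zero⟩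
  | succ N ih =>
    obtain ⟨j, hj⟩ := ih h.reduce
    by_cases hc : N = σ N
    · rw [← hc] at hj
      rw [Equiv.swap_self] at hj
      exact ⟨j, hj⟩
    · exact ⟨j + 1, isProd_succ.2 ⟨N, σ N, hc, _, hj, by simp⟩⟩

lemma reflLen_le {j : ℕ} {σ : Equiv.Perm ℕ} (h : IsProd j σ) : reflLen σ ≤ j := Nat.sInf_le h

lemma Fixes.isProd {N : ℕ} {σ : Equiv.Perm ℕ} (h : Fixes N σ) : IsProd (reflLen σ) σ :=
  Nat.sInf_mem (s := {k | IsProd k σ}) h.exists_isProd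

lemma reflLen_one : reflLen 1 = 0 := Nat.le_zero.1 (reflLen_le (isProd_zero.2 rfl))

lemma Fixes.reflLen_eq_zero {N : ℕ} {σ : Equiv.Perm ℕ} (h : Fixes N σ) :
    reflLen σ = 0 ↔ σ = 1 := by
  constructor
  · intro h0
    have := h.isProd
    rw [h0] at this
    exact isProd_zero.1 this
  · rintro rfl; exact reflLen_one

lemma Fixes.reflLen_step {N n : ℕ} {σ : Equiv.Perm ℕ} (h : Fixes N σ) (hn : σ n ≠ n) :
    Fixes N (Equiv.swap n (σ n) * σ) ∧
      reflLen σ = reflLen (Equiv.swap n (σ n) * σ) + 1 := by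
  have hN : Fixes N (Equiv.swap n (σ n) * σ) :=
    (fixes_swap (h.lt hn) (h.apply_lt (h.lt hn))).mul h
  refine ⟨hN, le_antisymm ?_ ?_⟩
  · apply reflLen_le
    exact isProd_succ.2 ⟨n, σ n, Ne.symm hn, _, hN.isProd, by simp⟩
  · obtain ⟨i, hi, hp⟩ := h.isProd.delete hn
    have := reflLen_le hp
    omega

lemma reflLen_swap {a b : ℕ} (h : a ≠ b) : reflLen (Equiv.swap a b) = 1 := by
  have hF : Fixes (a + b + 1) (Equiv.swap a b) := fixes_swap (by omega) (by omega)
  have h2 := (hF.reflLen_step (n := a) (by simpa using h.symm)).2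
  simpa [reflLen_one] using h2

lemma exists_ne_of_ne_one {σ : Equiv.Perm ℕ} (h : σ ≠ 1) : ∃ n, σ n ≠ n := by
  by_contra hc
  push Not at hc
  exact h (Equiv.ext hc)

lemma IsProd.parity {j N : ℕ} {σ : Equiv.Perm ℕ} (h : IsProd j σ) (hN : Fixes N σ) :
    (-1 : ℂ) ^ j = (-1) ^ reflLen σ := by
  induction j generalizing σ N with
  | zero => rw [isProd_zero.1 h, reflLen_one]
  | succ j ih =>
    by_cases h1 : σ = 1
    · subst h1
      obtain ⟨a, b, hab, τ, hτ, he⟩ := isProd_succ.1 h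
      have hτ' : τ = Equiv.swap a b := by
        have := congrArg (fun x => Equiv.swap a b * x) he
        simpa using this.symm
      subst hτ'
      have := ih hτ (fixes_swap (N := a + b + 1) (by omega) (by omega))
      rw [pow_succ, this, reflLen_swap hab, reflLen_one]
      norm_num
    · obtain ⟨n, hn⟩ := exists_ne_of_ne_one h1
      obtain ⟨i, hi, hp⟩ := h.delete hn
      obtain rfl : j = i := by omega
      obtain ⟨hF, hl⟩ := hN.reflLen_step hn
      rw [hl, pow_succ, pow_succ, ih hp hF]

lemma sign_mul {N : ℕ} {g h : Equiv.Perm ℕ} (hg : Fixes N g) (hh : Fixes N h) :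
    (-1 : ℂ) ^ reflLen (h⁻¹ * g) = (-1) ^ reflLen g * (-1) ^ reflLen h := by
  have h1 := (hh.isProd.mul (hh.inv.mul hg).isProd).parity (hh.mul (hh.inv.mul hg))
  rw [mul_inv_cancel_left, pow_add] at h1
  have h2 : ((-1 : ℂ) ^ reflLen h) * (-1) ^ reflLen h = 1 := by
    rw [← mul_pow]; simp
  rw [← h1, mul_right_comm, h2, one_mul]

lemma exists_common {k : ℕ} (g : Fin k → Equiv.Perm ℕ) (hg : ∀ i, g i ∈ SInfSet) :
    ∃ N, ∀ i, Fixes N (g i) := by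
  choose M hM using fun i => exists_fixes (hg i)
  exact ⟨Finset.univ.sup M, fun i => (hM i).mono (Finset.le_sup (Finset.mem_univ i))⟩

lemma posDef_neg {q : ℂ} (h : IsPosDefOn SInfSet (fun σ => q ^ reflLen σ)) :
    IsPosDefOn SInfSet (fun σ => (-q) ^ reflLen σ) := by
  intro k g hg z
  obtain ⟨N, hN⟩ := exists_common g hg
  have := h k g hg (fun i => z i * (-1) ^ reflLen (g i))
  refine this.trans_eq ?_
  refine Finset.sum_congr rfl fun i _ => Finset.sum_congr rfl fun j _ => ?_
  simp only [map_mul, map_pow, map_neg, map_one]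
  rw [neg_pow q, sign_mul (hN i) (hN j)]
  ring

open Classical in
lemma kernel_nonneg {k : ℕ} {T : Type*} (u : Fin k → T) (z : Fin k → ℂ) :
    0 ≤ ∑ i, ∑ j, z i * (starRingEnd ℂ) (z j) * (if u j = u i then 1 else 0) := by
  have : ∑ i, ∑ j, z i * (starRingEnd ℂ) (z j) * (if u j = u i then 1 else 0) =
      ∑ t ∈ Finset.univ.image u, (∑ i, if u i = t then z i else 0) *
        (starRingEnd ℂ) (∑ i, if u i = t then z i else 0) := by
    simp only [map_sum, Finset.sum_mul_sum]
    conv_rhs => rw [Finset.sum_comm]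
    refine Finset.sum_congr rfl fun i _ => ?_
    conv_rhs => rw [Finset.sum_comm]
    refine Finset.sum_congr rfl fun j _ => ?_
    rw [Finset.sum_eq_single (u i)]
    · by_cases h : u j = u i <;> simp [h]
    · intro b _ hb
      simp [Ne.symm hb]
    · intro h
      exact absurd (Finset.mem_image_of_mem u (Finset.mem_univ i)) h
  rw [this]
  exact Finset.sum_nonneg fun t _ => mul_star_self_nonneg _

lemma posDef_zero : IsPosDefOn SInfSet (fun σ => (0 : ℂ) ^ reflLen σ) := by
  classical
  intro k g hg z
  obtain ⟨N, hN⟩ := exists_common g hg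
  refine (kernel_nonneg g z).trans_eq ?_
  refine Finset.sum_congr rfl fun i _ => Finset.sum_congr rfl fun j _ => ?_
  congr 1
  have h1 := ((hN j).inv.mul (hN i)).reflLen_eq_zero
  rw [inv_mul_eq_one] at h1
  simp only [zero_pow_eq]
  congr 1
  exact propext h1.symm

/-- colourings of `ℕ` which are trivial beyond `N` -/
def Col (N k : ℕ) : Set (ℕ → Fin (k + 1)) := {f | ∀ i, N ≤ i → f i = 0}

lemma col_finite (N k : ℕ) : (Col N k).Finite := by
  refine Set.Finite.of_finite_image (f := fun f (i : Fin N) => f i) (Set.toFinite _) ?_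
  intro f hf g hg h
  funext i
  by_cases hi : i < N
  · exact congrFun h ⟨i, hi⟩
  · rw [hf i (not_lt.1 hi), hg i (not_lt.1 hi)]

lemma count {N k : ℕ} {σ : Equiv.Perm ℕ} (h : Fixes N σ) :
    {f ∈ Col N k | f ∘ σ = f}.ncard * (k + 1) ^ reflLen σ = (Col N k).ncard := by
  induction hl : reflLen σ generalizing σ with
  | zero =>
    rw [h.reflLen_eq_zero] at hl
    subst hl
    simp
  | succ l ih =>
    have h1 : σ ≠ 1 := by
      rintro rfl
      simp [reflLen_one] at hl
    obtain ⟨n, hn⟩ := exists_ne_of_ne_one h1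
    obtain ⟨hF, hs⟩ := h.reflLen_step hn
    have ih' := ih hF (by omega)
    have hnN := h.lt hn
    set m := σ n with hm
    set τ := Equiv.swap n m * σ with hτ
    have hτn : τ n = n := by simp [hτ, ← hm]
    have hστ : ∀ i, σ i = Equiv.swap n m (τ i) := by intro i; simp [hτ]
    have hτne : ∀ i, i ≠ n → τ i ≠ n := fun i hi hc =>
      hi (τ.injective (hc.trans hτn.symm))
    rw [← ih', pow_succ', ← mul_assoc]
    congr 1
    rw [← Nat.card_coe_set_eq, ← Nat.card_coe_set_eq]
    have hcard : ∀ A : Type, Nat.card A * (k + 1) = Nat.card (A × Fin (k + 1)) := by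
      intro A; rw [Nat.card_prod, Nat.card_fin]
    rw [hcard]
    -- membership for σ
    have hσmem : ∀ f : ℕ → Fin (k + 1), f ∘ σ = f ↔ (f ∘ τ = f ∧ f m = f n) := by
      intro f
      have hsw : f m = f n → ∀ x, f (Equiv.swap n m x) = f x := by
        intro e x
        rw [Equiv.swap_apply_def]
        split_ifs with h1 h2
        · rw [h1, e]
        · rw [h2, e]
        · rfl
      constructor
      · intro hf
        have e : f m = f n := congrFun hf n
        refine ⟨funext fun i => ?_, e⟩
        have := congrFun hf i
        simp only [Function.comp_apply] at this ⊢
        rw [← this, hστ, hsw e]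
      · rintro ⟨hf, e⟩
        funext i
        have := congrFun hf i
        simp only [Function.comp_apply] at this ⊢
        rw [hστ, hsw e, this]
    have hupd : ∀ (f : ℕ → Fin (k + 1)) c, f ∘ τ = f →
        Function.update f n c ∘ τ = Function.update f n c := by
      intro f c hf
      funext i
      by_cases hi : i = n
      · subst hi; simp [hτn]
      · have := congrFun hf i
        simp only [Function.comp_apply] at this ⊢
        rw [Function.update_of_ne (hτne i hi), Function.update_of_ne hi, this]
    have hcol : ∀ (f : ℕ → Fin (k + 1)) c, f ∈ Col N k → Function.update f n c ∈ Col N k := by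
      intro f c hf i hi
      rw [Function.update_of_ne (by omega), hf i hi]
    refine Nat.card_congr
      { toFun := fun p => ⟨Function.update p.1.1 n p.2, hcol _ _ p.1.2.1,
          hupd _ _ ((hσmem _).1 p.1.2.2).1⟩
        invFun := fun f => (⟨Function.update f.1 n (f.1 m), hcol _ _ f.2.1,
          (hσmem _).2 ⟨hupd _ _ f.2.2, by simp [Function.update_of_ne hn]⟩⟩, f.1 n)
        left_inv := ?_
        right_inv := ?_ }
    · rintro ⟨⟨f, hf1, hf2⟩, c⟩
      have := ((hσmem _).1 hf2).2
      simp [Function.update_of_ne hn, this]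
    · rintro ⟨f, hf1, hf2⟩
      simp

lemma posDef_inv (k : ℕ) :
    IsPosDefOn SInfSet (fun σ => (((k + 1 : ℕ) : ℂ)⁻¹) ^ reflLen σ) := by
  classical
  intro n g hg z
  obtain ⟨N, hN⟩ := exists_common g hg
  have hfin := col_finite N k
  have hC : 0 < (Col N k).ncard := by
    rw [Set.ncard_pos hfin]
    exact ⟨fun _ => 0, fun _ _ => rfl⟩
  have key : ∀ i j, (((k + 1 : ℕ) : ℂ)⁻¹) ^ reflLen ((g j)⁻¹ * g i) =
      (((Col N k).ncard : ℂ))⁻¹ * ∑ f ∈ hfin.toFinset,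
        if f ∘ ⇑(g j)⁻¹ = f ∘ ⇑(g i)⁻¹ then 1 else 0 := by
    intro i j
    have h1 := count (k := k) ((hN j).inv.mul (hN i))
    have h2 : {f ∈ Col N k | f ∘ ⇑((g j)⁻¹ * g i) = f} =
        ((hfin.toFinset.filter fun f => f ∘ ⇑(g j)⁻¹ = f ∘ ⇑(g i)⁻¹ : Finset _) : Set _) := by
      ext f
      simp only [Set.mem_setOf_eq, Finset.coe_filter, Set.Finite.mem_toFinset]
      refine and_congr_right fun _ => ?_
      constructor
      · intro h
        funext x
        have := congrFun h ((g i)⁻¹ x)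
        simpa using this
      · intro h
        funext x
        have := congrFun h (g i x)
        simpa using this
    rw [h2, Set.ncard_coe_finset] at h1
    rw [Finset.sum_boole, ← h1]
    have h3 : (((k + 1 : ℕ) : ℂ)) ≠ 0 := by exact_mod_cast Nat.succ_ne_zero k
    have h4 : (((hfin.toFinset.filter fun f => f ∘ ⇑(g j)⁻¹ = f ∘ ⇑(g i)⁻¹).card : ℕ) : ℂ) ≠ 0 := by
      intro h0
      rw [Nat.cast_eq_zero] at h0
      rw [h0] at h1
      omega
    rw [Nat.cast_mul, Nat.cast_pow, inv_pow, mul_inv, mul_right_comm, inv_mul_cancel₀ h4, one_mul]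
  have : ∑ i, ∑ j, z i * (starRingEnd ℂ) (z j) * (((k + 1 : ℕ) : ℂ)⁻¹) ^ reflLen ((g j)⁻¹ * g i) =
      (((Col N k).ncard : ℂ))⁻¹ * ∑ f ∈ hfin.toFinset, ∑ i, ∑ j, z i * (starRingEnd ℂ) (z j) *
        (if f ∘ ⇑(g j)⁻¹ = f ∘ ⇑(g i)⁻¹ then 1 else 0) := by
    conv_rhs => rw [Finset.sum_comm, Finset.mul_sum]
    refine Finset.sum_congr rfl fun i _ => ?_
    conv_rhs => rw [Finset.sum_comm, Finset.mul_sum]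
    refine Finset.sum_congr rfl fun j _ => ?_
    rw [key, ← Finset.mul_sum]
    ring
  show 0 ≤ ∑ i, ∑ j, z i * (starRingEnd ℂ) (z j) *
    (((k + 1 : ℕ) : ℂ)⁻¹) ^ reflLen ((g j)⁻¹ * g i)
  rw [this]
  refine mul_nonneg ?_ (Finset.sum_nonneg fun f _ =>
    kernel_nonneg (fun i => f ∘ ⇑(g i)⁻¹) z)
  exact inv_nonneg.2 (Nat.cast_nonneg _)

open Classical in
/-- the finite symmetric group inside `S(∞)`, as a finset -/
def Sym : ℕ → Finset (Equiv.Perm ℕ)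
  | 0 => {1}
  | N + 1 => (Finset.range (N + 1) ×ˢ Sym N).image fun p => Equiv.swap N p.1 * p.2

lemma mem_Sym {N : ℕ} {σ : Equiv.Perm ℕ} : σ ∈ Sym N ↔ Fixes N σ := by
  induction N generalizing σ with
  | zero =>
    simp only [Sym, Finset.mem_singleton]
    exact ⟨fun h => by rw [h]; exact fun _ _ => rfl, fun h => h.zero⟩
  | succ N ih =>
    simp only [Sym, Finset.mem_image, Finset.mem_product, Finset.mem_range, Prod.exists]
    constructor
    · rintro ⟨m, τ, ⟨hm, hτ⟩, rfl⟩
      exact (fixes_swap (Nat.lt_succ_self N) hm).mul ((ih.1 hτ).mono (Nat.le_succ N))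
    · intro h
      exact ⟨σ N, _, ⟨h.apply_lt (Nat.lt_succ_self N), ih.2 h.reduce⟩, by simp⟩

lemma sum_Sym (q : ℂ) (N : ℕ) :
    ∑ σ ∈ Sym N, q ^ reflLen σ = ∏ i ∈ Finset.range N, (1 + i * q) := by
  induction N with
  | zero => simp [Sym, reflLen_one]
  | succ N ih =>
    classical
    rw [Sym, Finset.sum_image, Finset.sum_product, Finset.sum_range_succ, Finset.prod_range_succ,
      ← ih]
    · have : ∀ m ∈ Finset.range N, ∑ τ ∈ Sym N, q ^ reflLen (Equiv.swap N m * τ) =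
          q * ∑ τ ∈ Sym N, q ^ reflLen τ := by
        intro m hm
        rw [Finset.mem_range] at hm
        rw [Finset.mul_sum]
        refine Finset.sum_congr rfl fun τ hτ => ?_
        have hF := mem_Sym.1 hτ
        have h1 : Fixes (N + 1) (Equiv.swap N m * τ) :=
          (fixes_swap (Nat.lt_succ_self N) (by omega)).mul (hF.mono (Nat.le_succ N))
        have h2 : (Equiv.swap N m * τ) N = m := by simp [hF N le_rfl]
        have h3 := (h1.reflLen_step (n := N) (by rw [h2]; omega)).2
        rw [h2, Equiv.swap_mul_self_mul] at h3
        rw [h3, pow_succ']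
      rw [Finset.sum_congr rfl this]
      have e0 : ∀ τ : Equiv.Perm ℕ, Equiv.swap N N * τ = τ := by
        intro τ; rw [Equiv.swap_self]; rfl
      simp only [e0, Finset.sum_const, Finset.card_range, nsmul_eq_mul]
      ring
    · rintro ⟨m, τ⟩ h1 ⟨m', τ'⟩ h2 he
      simp only [Finset.coe_product, Set.mem_prod, Finset.mem_coe] at h1 h2
      have e1 := (mem_Sym.1 h1.2) N le_rfl
      have e2 := (mem_Sym.1 h2.2) N le_rfl
      have e3 : m = m' := by
        have := congrArg (fun s : Equiv.Perm ℕ => s N) he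
        simpa [e1, e2] using this
      subst e3
      simpa using he

lemma prod_nonneg_of_posDef {q : ℂ} (h : IsPosDefOn SInfSet (fun σ => q ^ reflLen σ)) (N : ℕ) :
    0 ≤ ∏ i ∈ Finset.range N, (1 + i * q) := by
  have e := (Sym N).equivFin.symm
  have h1 := h _ (fun i => (e i : Equiv.Perm ℕ)) (fun i => (mem_Sym.1 (e i).2).mem) (fun _ => 1)
  simp only [map_one, one_mul] at h1
  rw [Finset.sum_comm] at h1
  have h2 : ∀ j, ∑ i, q ^ reflLen ((e j : Equiv.Perm ℕ)⁻¹ * (e i : Equiv.Perm ℕ)) =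
      ∑ σ ∈ Sym N, q ^ reflLen σ := by
    intro j
    rw [Equiv.sum_comp e fun x : Sym N => q ^ reflLen ((e j : Equiv.Perm ℕ)⁻¹ * (x : Equiv.Perm ℕ)),
      Finset.sum_coe_sort (Sym N) fun x => q ^ reflLen ((e j : Equiv.Perm ℕ)⁻¹ * x)]
    have hj := mem_Sym.1 (e j).2
    refine Finset.sum_bij' (fun x _ => (e j : Equiv.Perm ℕ)⁻¹ * x)
      (fun x _ => (e j : Equiv.Perm ℕ) * x) ?_ ?_ ?_ ?_ ?_
    · intro x hx; exact mem_Sym.2 (hj.inv.mul (mem_Sym.1 hx))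
    · intro x hx; exact mem_Sym.2 (hj.mul (mem_Sym.1 hx))
    · intro x _; simp
    · intro x _; simp
    · intro x _; rfl
  rw [Finset.sum_congr rfl fun j _ => h2 j, sum_Sym, Finset.sum_const, nsmul_eq_mul] at h1
  have hpos : 0 < (Sym N).card := Finset.card_pos.2 ⟨1, mem_Sym.2 fun _ _ => rfl⟩
  rw [Finset.card_univ, Fintype.card_fin] at h1
  have hpos' : (0 : ℂ) < ((Sym N).card : ℂ) := by exact_mod_cast hpos
  have h3 := mul_nonneg (inv_nonneg.2 hpos'.le) h1
  rwa [inv_mul_cancel_left₀ hpos'.ne'] at h3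

lemma real_case {r : ℝ} (hr : r < 0) (h : ∀ N, 0 ≤ ∏ i ∈ Finset.range N, (1 + (i : ℝ) * r)) :
    ∃ n : ℕ, 1 + (n : ℝ) * r = 0 := by
  by_contra hc
  push Not at hc
  have hex : ∃ n : ℕ, 1 + (n : ℝ) * r < 0 := by
    obtain ⟨n, hn⟩ := exists_nat_gt (-1 / r)
    refine ⟨n, ?_⟩
    rw [div_lt_iff_of_neg hr] at hn
    linarith
  classical
  have h1 := Nat.find_spec hex
  have h2 : 0 < ∏ i ∈ Finset.range (Nat.find hex), (1 + (i : ℝ) * r) := by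
    refine Finset.prod_pos fun i hi => ?_
    have := Nat.find_min hex (Finset.mem_range.1 hi)
    exact lt_of_le_of_ne (not_lt.1 this) (Ne.symm (hc i))
  have h3 := h (Nat.find hex + 1)
  rw [Finset.prod_range_succ] at h3
  exact absurd h3 (not_le.2 (mul_neg_of_pos_of_neg h2 h1))

lemma neg_case {r : ℝ} (hr : r < 0) (h : IsPosDefOn SInfSet (fun σ => (r : ℂ) ^ reflLen σ)) :
    ∃ n : ℕ, n ≠ 0 ∧ (r : ℂ) = -((n : ℂ))⁻¹ := by
  obtain ⟨n, hn⟩ := real_case hr fun N => by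
    have := prod_nonneg_of_posDef h N
    exact_mod_cast this
  have hn0 : n ≠ 0 := by rintro rfl; simp at hn
  refine ⟨n, hn0, ?_⟩
  have h1 : r = -((n : ℝ))⁻¹ := by
    have : (n : ℝ) ≠ 0 := by exact_mod_cast hn0
    field_simp
    linarith
  rw [h1]; push_cast; rfl

lemma exists_real {q : ℂ} (h : IsPosDefOn SInfSet (fun σ => q ^ reflLen σ)) :
    ∃ r : ℝ, q = r := by
  have h1 := prod_nonneg_of_posDef h 2
  simp only [Finset.prod_range_succ, Finset.prod_range_zero] at h1
  refine ⟨q.re, ?_⟩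
  rw [Complex.nonneg_iff] at h1
  apply Complex.ext
  · simp
  · simpa using h1.2.symm

/-- the reflection function q^{ℓ_R} is positive definite on S(∞) iff
q = 0 or q⁻¹ ∈ ℤ.  (The exponent is a natural number, so q^{ℓ_R(id)} = q^0 = 1 even
when q = 0.) -/
theorem reflection_function_posdef_iff_symm (q : ℂ) :
    IsPosDefOn SInfSet (fun σ => q ^ reflLen σ) ↔
      (q = 0 ∨ ∃ k : ℤ, k ≠ 0 ∧ q = ((k : ℂ))⁻¹) := by
  constructor
  · intro h
    obtain ⟨r, rfl⟩ := exists_real h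
    rcases lt_trichotomy r 0 with hr | rfl | hr
    · obtain ⟨n, hn, e⟩ := neg_case hr h
      exact Or.inr ⟨-n, by simpa using hn, by rw [e]; push_cast; rw [inv_neg]⟩
    · left; simp
    · have h' := posDef_neg h
      rw [← Complex.ofReal_neg] at h'
      obtain ⟨n, hn, e⟩ := neg_case (neg_lt_zero.2 hr) h'
      refine Or.inr ⟨n, by simpa using hn, ?_⟩
      rw [Complex.ofReal_neg, neg_inj] at e
      rw [e]; push_cast; rfl
  · rintro (rfl | ⟨k, hk, rfl⟩)
    · exact posDef_zero
    · obtain ⟨n, rfl | rfl⟩ := k.eq_nat_or_neg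
      · obtain ⟨m, rfl⟩ := Nat.exists_eq_succ_of_ne_zero (n := n) (by rintro rfl; simp at hk)
        simpa using posDef_inv m
      · obtain ⟨m, rfl⟩ := Nat.exists_eq_succ_of_ne_zero (n := n) (by rintro rfl; simp at hk)
        have := posDef_neg (posDef_inv m)
        rw [← inv_neg] at this
        simpa using this

end TypeA
end
end
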